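/- arXiv:1407.1919 — 3 statements merged into one kernel-verified Lean document; each statement's English description precedes it below -/
import Mathlib

section
/- For every natural number r, the count S_5(r) satisfies 241920·S_5(r) = (r+1)(r+2)(r+3)·(43r⁸ + 688r⁷ + 4934r⁶ + 20680r⁵ + 55907r⁴ + 101272r³ + 123436r² + 96240r + 40320). -/
/-- `S n r` is the number of `n × n` matrices with nonnegative integer entries,
all diagonal entries zero, and every row sum and every column sum equal to `r`. -/
noncomputable def S (n r : ℕ) : ℕ :=
  Nat.card {M : Matrix (Fin n) (Fin n) ℕ //
    (∀ i, M i i = 0) ∧ (∀ i, ∑ j, M i j = r) ∧ (∀ j, ∑ i, M i j = r)}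

namespace Soccer

open Finset Polynomial

/-- Matrices with all line sums equal to `r`. -/
def Mat (r : ℕ) : Finset (Fin 5 → Fin 5 → ℕ) :=
  (Fintype.piFinset fun _ => Fintype.piFinset fun _ => range (r + 1)).filter
    fun M => (∀ i, ∑ j, M i j = r) ∧ (∀ j, ∑ i, M i j = r)

lemma mem_Mat {r : ℕ} {M : Fin 5 → Fin 5 → ℕ} :
    M ∈ Mat r ↔ (∀ i, ∑ j, M i j = r) ∧ (∀ j, ∑ i, M i j = r) := by
  unfold Mat
  rw [mem_filter]
  constructor
  · exact fun h => h.2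
  · intro h
    refine ⟨?_, h⟩
    rw [Fintype.mem_piFinset]
    intro i
    rw [Fintype.mem_piFinset]
    intro j
    rw [mem_range, Nat.lt_succ_iff, ← h.1 i]
    exact single_le_sum (f := fun j => M i j) (fun _ _ => Nat.zero_le _) (mem_univ j)

/-- Number of matrices with line sums `r` supported in `A`. -/
def N (A : Finset (Fin 5 × Fin 5)) (r : ℕ) : ℕ :=
  ((Mat r).filter fun M => ∀ c, c ∉ A → M c.1 c.2 = 0).card

/-- Number of matrices with line sums `r` supported in `A` and nonzero on `X`. -/
def NP (A X : Finset (Fin 5 × Fin 5)) (r : ℕ) : ℕ :=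
  ((Mat r).filter fun M => (∀ c, c ∉ A → M c.1 c.2 = 0) ∧ ∀ c ∈ X, M c.1 c.2 ≠ 0).card

lemma NP_eq (A X : Finset (Fin 5 × Fin 5)) (r : ℕ) :
    (NP A X r : ℚ) = ∑ T ∈ X.powerset, (-1) ^ T.card * (N (A \ T) r : ℚ) := by
  have h1 : ∀ T, (N (A \ T) r : ℚ) = ∑ M ∈ Mat r,
      (if ∀ c, c ∉ A → M c.1 c.2 = 0 then (1 : ℚ) else 0) *
        ∏ c ∈ T, (if M c.1 c.2 = 0 then (1 : ℚ) else 0) := by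
    intro T
    unfold N
    rw [card_filter]
    push_cast
    refine sum_congr rfl fun M _ => ?_
    rw [prod_ite_zero]
    simp only [prod_const_one, ← ite_and, mul_ite, mul_one, mul_zero]
    refine if_congr ?_ rfl rfl
    constructor
    · intro h
      exact ⟨fun c hc => h c (by simp [hc]), fun c hc => h c (by simp [hc])⟩
    · rintro ⟨h, h'⟩ c hc
      by_cases hA : c ∈ A
      · exact h c (by simpa [hA] using hc)
      · exact h' c hA
  have h2 : (NP A X r : ℚ) = ∑ M ∈ Mat r,
      (if ∀ c, c ∉ A → M c.1 c.2 = 0 then (1 : ℚ) else 0) *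
        ∏ c ∈ X, (1 - if M c.1 c.2 = 0 then (1 : ℚ) else 0) := by
    unfold NP
    rw [card_filter]
    push_cast
    refine sum_congr rfl fun M _ => ?_
    have : ∀ c ∈ X, (1 - if M c.1 c.2 = 0 then (1 : ℚ) else 0) =
        if M c.1 c.2 ≠ 0 then (1 : ℚ) else 0 := by
      intro c _
      by_cases h : M c.1 c.2 = 0 <;> simp [h]
    rw [prod_congr rfl this, prod_ite_zero]
    simp only [prod_const_one, ← ite_and, mul_ite, mul_one, mul_zero]
    refine if_congr ?_ rfl rfl
    tauto
  rw [h2]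
  simp only [h1, mul_sum]
  rw [sum_comm]
  refine sum_congr rfl fun M _ => ?_
  rw [prod_sub, mul_sum]
  refine sum_congr rfl fun T _ => ?_
  rw [prod_const_one]
  ring

lemma NP_shift (A X : Finset (Fin 5 × Fin 5)) (hX : X ⊆ A) (k r : ℕ)
    (hr : ∀ i, ∑ j, (if (i, j) ∈ X then 1 else 0) = k)
    (hc : ∀ j, ∑ i, (if (i, j) ∈ X then 1 else 0) = k) :
    NP A X (r + k) = N A r := by
  unfold NP N
  symm
  refine card_bij (fun M _ => fun i j => M i j + if (i, j) ∈ X then 1 else 0) ?_ ?_ ?_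
  · intro M hM
    rw [mem_filter, mem_Mat] at hM ⊢
    obtain ⟨⟨h1, h2⟩, h3⟩ := hM
    refine ⟨⟨fun i => ?_, fun j => ?_⟩, fun c hc => ?_, fun c hc => ?_⟩
    · rw [sum_add_distrib, h1, hr]
    · rw [sum_add_distrib, h2, hc]
    · have : c ∉ X := fun h => hc (hX h)
      simp [h3 c hc, this]
    · simp [hc]
  · intro M _ M' _ h
    funext i j
    have := congrFun (congrFun h i) j
    simpa using this
  · intro M hM
    rw [mem_filter, mem_Mat] at hM
    obtain ⟨⟨h1, h2⟩, h3, h4⟩ := hM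
    have key : ∀ i j, (M i j - if (i, j) ∈ X then 1 else 0) +
        (if (i, j) ∈ X then 1 else 0) = M i j := by
      intro i j
      by_cases h : (i, j) ∈ X
      · have := h4 _ h
        simp only [h, if_true]
        simp only at this
        omega
      · simp [h]
    refine ⟨fun i j => M i j - if (i, j) ∈ X then 1 else 0, ?_, ?_⟩
    · rw [mem_filter, mem_Mat]
      refine ⟨⟨fun i => ?_, fun j => ?_⟩, fun c hc => ?_⟩
      · have := h1 i
        rw [← sum_congr rfl (fun j _ => key i j), sum_add_distrib, hr] at this
        omega
      · have := h2 j
        rw [← sum_congr rfl (fun i _ => key i j), sum_add_distrib, hc] at this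
        omega
      · simp [h3 c hc]
    · funext i j
      exact key i j

/-- A nonzero matrix with equal line sums contains a permutation in its support. -/
lemma exists_perm {r : ℕ} (hr : 0 < r) {M : Fin 5 → Fin 5 → ℕ} (hM : M ∈ Mat r) :
    ∃ σ : Equiv.Perm (Fin 5), ∀ i, M i (σ i) ≠ 0 := by
  rw [mem_Mat] at hM
  have hr' : (r : ℚ) ≠ 0 := by positivity
  have hD : (Matrix.of fun i j => (M i j : ℚ) / r) ∈ doublyStochastic ℚ (Fin 5) := by
    rw [mem_doublyStochastic_iff_sum]
    refine ⟨fun i j => by simp only [Matrix.of_apply]; positivity, fun i => ?_, fun j => ?_⟩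
    · simp only [Matrix.of_apply]
      rw [← sum_div, ← Nat.cast_sum, hM.1 i, div_self hr']
    · simp only [Matrix.of_apply]
      rw [← sum_div, ← Nat.cast_sum, hM.2 j, div_self hr']
  obtain ⟨w, hw, hw1, hw2⟩ := exists_eq_sum_perm_of_mem_doublyStochastic hD
  obtain ⟨σ, -, hσ⟩ : ∃ σ ∈ (univ : Finset (Equiv.Perm (Fin 5))), w σ ≠ 0 := by
    apply exists_ne_zero_of_sum_ne_zero
    rw [hw1]
    exact one_ne_zero
  refine ⟨σ, fun i h0 => hσ ?_⟩
  have h := congrFun (congrFun hw2 i) (σ i)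
  rw [Matrix.sum_apply] at h
  simp only [Matrix.of_apply, h0, Nat.cast_zero, zero_div] at h
  rw [sum_eq_zero_iff_of_nonneg] at h
  · have := h σ (mem_univ _)
    simpa [PEquiv.toMatrix_apply, Equiv.toPEquiv_apply] using this
  · intro τ _
    rw [Matrix.smul_apply, smul_eq_mul]
    refine mul_nonneg (hw τ) ?_
    exact nonneg_of_mem_doublyStochastic permMatrix_mem_doublyStochastic

lemma N_zero (A : Finset (Fin 5 × Fin 5)) : N A 0 = 1 := by
  unfold N
  rw [card_eq_one]
  refine ⟨0, ?_⟩
  ext M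
  rw [mem_filter, mem_Mat, mem_singleton]
  constructor
  · rintro ⟨⟨h, -⟩, -⟩
    funext i j
    have := h i
    rw [sum_eq_zero_iff] at this
    exact this j (mem_univ _)
  · rintro rfl
    simp

/-- Antidifferences of polynomials. -/
lemma exists_antidiff (g : ℚ[X]) :
    ∃ P : ℚ[X], ∀ n : ℕ, P.eval (n : ℚ) = ∑ k ∈ range n, g.eval (k : ℚ) := by
  induction g using Polynomial.induction_on' with
  | add p q hp hq =>
    obtain ⟨P, hP⟩ := hp
    obtain ⟨Q, hQ⟩ := hq
    exact ⟨P + Q, fun n => by simp [hP, hQ, sum_add_distrib]⟩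
  | monomial m a =>
    refine ⟨C (a / (m + 1)) * (Polynomial.bernoulli (m + 1) - C (_root_.bernoulli (m + 1))), fun n => ?_⟩
    have := sum_range_pow_eq_bernoulli_sub n m
    simp only [eval_mul, eval_C, eval_sub, eval_monomial]
    rw [← mul_sum]
    simp only [Nat.succ_eq_add_one] at this
    rw [← this]
    have : (m + 1 : ℚ) ≠ 0 := by positivity
    field_simp

lemma exists_sum_poly {ι : Type*} (s : Finset ι) (f : ℕ → ℚ) (c : ι → ℚ) (u : ι → ℕ → ℚ)
    (q : ι → ℚ[X]) (hq : ∀ T ∈ s, ∀ r : ℕ, 0 < r → u T r = (q T).eval (r : ℚ)) (h0 : f 0 = 1)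
    (hf : ∀ r, f (r + 1) = f r - ∑ T ∈ s, c T * u T (r + 1)) :
    ∃ P : ℚ[X], ∀ r : ℕ, f r = P.eval (r : ℚ) := by
  obtain ⟨P, hP⟩ := exists_antidiff ((∑ T ∈ s, C (c T) * q T).comp (Polynomial.X + 1))
  refine ⟨1 - P, fun r => ?_⟩
  rw [eval_sub, eval_one, hP]
  induction r with
  | zero => simp [h0]
  | succ r ihr =>
    rw [sum_range_succ, hf, ihr]
    have e : eval (r : ℚ) ((∑ T ∈ s, C (c T) * q T).comp (Polynomial.X + 1)) =
        ∑ T ∈ s, c T * u T (r + 1) := by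
      rw [eval_comp, eval_finsetSum]
      refine sum_congr rfl fun T hT => ?_
      rw [hq T hT (r + 1) (Nat.succ_pos r)]
      simp
    rw [e]
    ring

/-- Every `N A` is polynomial on positive arguments. -/
lemma exists_poly (A : Finset (Fin 5 × Fin 5)) :
    ∃ p : ℚ[X], (∀ r : ℕ, 0 < r → (N A r : ℚ) = p.eval (r : ℚ)) ∧
      ((∃ σ : Equiv.Perm (Fin 5), ∀ i, (i, σ i) ∈ A) → p.eval 0 = 1) := by
  induction A using Finset.strongInduction with
  | H A ih =>
  by_cases hσ : ∃ σ : Equiv.Perm (Fin 5), ∀ i, (i, σ i) ∈ A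
  · obtain ⟨σ, hσ⟩ := hσ
    set X : Finset (Fin 5 × Fin 5) := univ.image fun i => (i, σ i) with hX
    have hXA : X ⊆ A := by
      intro c hc
      rw [hX, mem_image] at hc
      obtain ⟨i, -, rfl⟩ := hc
      exact hσ i
    have memX : ∀ i j, (i, j) ∈ X ↔ σ i = j := by
      intro i j
      rw [hX, mem_image]
      constructor
      · rintro ⟨k, -, hk⟩
        rw [Prod.mk.injEq] at hk
        obtain ⟨rfl, h⟩ := hk
        exact h
      · intro h
        exact ⟨i, mem_univ _, by rw [h]⟩
    have hrec : ∀ r : ℕ, (N A r : ℚ) =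
        ∑ T ∈ X.powerset, (-1) ^ T.card * (N (A \ T) (r + 1) : ℚ) := by
      intro r
      rw [← NP_eq, NP_shift A X hXA 1 r]
      · intro i
        simp [memX]
      · intro j
        simp only [memX]
        have : ∀ i, (σ i = j) ↔ (i = σ.symm j) := fun i => by
          rw [Equiv.eq_symm_apply]
        simp [this]
    have hex : ∀ T, ∃ p : ℚ[X], T ∈ X.powerset.erase ∅ →
        ∀ r : ℕ, 0 < r → (N (A \ T) r : ℚ) = p.eval (r : ℚ) := by
      intro T
      by_cases hT : T ∈ X.powerset.erase ∅
      · rw [mem_erase, mem_powerset] at hT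
        obtain ⟨p, hp, -⟩ := ih (A \ T)
          (sdiff_ssubset (hT.2.trans hXA) (nonempty_iff_ne_empty.2 hT.1))
        exact ⟨p, fun _ => hp⟩
      · exact ⟨0, fun h => absurd h hT⟩
    choose q hq using hex
    obtain ⟨P, hall⟩ := exists_sum_poly (X.powerset.erase ∅) (fun r => (N A r : ℚ))
      (fun T => (-1) ^ T.card) (fun T r => (N (A \ T) r : ℚ)) q hq (by simp [N_zero]) (by
        intro r
        have h := hrec r
        rw [← add_sum_erase _ _ (empty_mem_powerset X)] at h
        simp only [card_empty, pow_zero, one_mul, sdiff_empty] at h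
        linarith)
    refine ⟨P, fun r _ => hall r, fun _ => ?_⟩
    have := hall 0
    simp only [N_zero] at this
    simpa using this.symm
  · refine ⟨0, fun r hr => ?_, fun h => absurd h hσ⟩
    rw [eval_zero, Nat.cast_eq_zero]
    unfold N
    rw [card_eq_zero, filter_eq_empty_iff]
    intro M hM h
    obtain ⟨σ, h'⟩ := exists_perm hr hM
    refine hσ ⟨σ, fun i => ?_⟩
    by_contra hc
    exact h' i (h _ hc)

/-- The off-diagonal cells. -/
def O : Finset (Fin 5 × Fin 5) := univ.filter fun c => c.1 ≠ c.2

lemma S_eq (r : ℕ) : S 5 r = N O r := by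
  unfold S N
  rw [← Nat.card_eq_finsetCard]
  have key : ∀ M : Fin 5 → Fin 5 → ℕ,
      ((∀ i, M i i = 0) ∧ (∀ i, ∑ j, M i j = r) ∧ (∀ j, ∑ i, M i j = r)) ↔
      M ∈ (Mat r).filter fun M => ∀ c, c ∉ O → M c.1 c.2 = 0 := by
    intro M
    rw [mem_filter, mem_Mat]
    constructor
    · rintro ⟨h1, h2⟩
      refine ⟨h2, fun c hc => ?_⟩
      have : c.1 = c.2 := by simpa [O] using hc
      rw [← this]
      exact h1 _
    · rintro ⟨h1, h2⟩
      exact ⟨fun i => h2 (i, i) (by simp [O]), h1⟩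
  exact Nat.card_congr (Equiv.subtypeEquivRight key)

lemma N_O_le (r : ℕ) : N O r ≤ (r + 1) ^ 11 := by
  have : ((range (r + 1)) ×ˢ (range (r + 1)) ×ˢ (range (r + 1)) ×ˢ (range (r + 1)) ×ˢ
     (range (r + 1)) ×ˢ (range (r + 1)) ×ˢ (range (r + 1)) ×ˢ (range (r + 1)) ×ˢ
     (range (r + 1)) ×ˢ (range (r + 1)) ×ˢ (range (r + 1))).card = (r + 1) ^ 11 := by
    simp only [card_product, card_range]
    ring
  rw [← this]
  refine card_le_card_of_injOn (fun M => (M 0 1, M 0 2, M 0 3, M 1 0, M 1 2, M 1 3, M 2 0,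
    M 2 1, M 2 3, M 3 0, M 3 1)) ?_ ?_
  · intro M hM
    have hM : M ∈ Mat r := (mem_filter.1 hM).1
    have : ∀ i j, M i j < r + 1 := by
      unfold Mat at hM
      have := (mem_filter.1 hM).1
      intro i j
      have := Fintype.mem_piFinset.1 this i
      have := Fintype.mem_piFinset.1 this j
      exact mem_range.1 this
    simp [this]
  · intro M hM M' hM' h
    have hM := mem_filter.1 hM
    have hM' := mem_filter.1 hM'
    simp only [Prod.mk.injEq] at h
    have d : ∀ i, M i i = 0 := fun i => hM.2 (i, i) (by simp [O])
    have d' : ∀ i, M' i i = 0 := fun i => hM'.2 (i, i) (by simp [O])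
    have e := mem_Mat.1 hM.1
    have e' := mem_Mat.1 hM'.1
    simp only [Fin.forall_fin_succ, Fin.sum_univ_five] at d d' e e'
    simp at d d' e e'
    funext i j
    fin_cases i <;> fin_cases j <;> simp <;> omega

lemma exists_poly_S : ∃ p : ℚ[X], (∀ r : ℕ, (S 5 r : ℚ) = p.eval (r : ℚ)) ∧
    p.natDegree ≤ 11 ∧ p.eval (-1) = 0 ∧ p.eval (-2) = 0 ∧ p.eval (-3) = 0 := by
  choose q hq hq0 using exists_poly
  have hall : ∀ r : ℕ, (N O r : ℚ) = (q O).eval (r : ℚ) := by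
    intro r
    rcases Nat.eq_zero_or_pos r with rfl | h
    · rw [N_zero, Nat.cast_zero, hq0]
      · simp
      · exact ⟨finRotate 5, by decide⟩
    · exact hq O r h
  have hcomp : q O = (∑ T ∈ O.powerset, C ((-1) ^ T.card) * q (O \ T)).comp
      (Polynomial.X + C 4) := by
    apply eq_of_infinite_eval_eq
    refine Set.Infinite.mono ?_ (Set.infinite_range_of_injective (Nat.cast_injective (R := ℚ)))
    rintro _ ⟨r, rfl⟩
    rw [Set.mem_ofPred_eq, ← hall, ← NP_shift O O (Subset.refl _) 4 r (by decide) (by decide), NP_eq,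
      eval_comp, eval_finsetSum]
    refine sum_congr rfl fun T _ => ?_
    rw [hq _ _ (by omega)]
    simp
  have hz : ∀ r : ℕ, 0 < r → r < 4 → (q O).eval ((r : ℚ) - 4) = 0 := by
    intro r h0 h4
    rw [hcomp, eval_comp, eval_finsetSum]
    have : NP O O r = 0 := by
      unfold NP
      rw [card_eq_zero, filter_eq_empty_iff]
      rintro M hM ⟨-, h⟩
      have e := (mem_Mat.1 hM).1 0
      rw [Fin.sum_univ_five] at e
      have h1 := h (0, 1) (by decide)
      have h2 := h (0, 2) (by decide)
      have h3 := h (0, 3) (by decide)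
      have h4 := h (0, 4) (by decide)
      simp only at h1 h2 h3 h4
      omega
    have h := NP_eq O O r
    rw [this, Nat.cast_zero] at h
    rw [h]
    refine sum_congr rfl fun T _ => ?_
    rw [hq _ _ h0]
    simp
  refine ⟨q O, fun r => by rw [S_eq, hall], ?_, ?_, ?_, ?_⟩
  · by_contra hdeg
    push Not at hdeg
    have hQ : ((Polynomial.X + C 1 : ℚ[X]) ^ 11).natDegree = 11 := by
      rw [natDegree_pow, natDegree_X_add_C]
    have hQ0 : ((Polynomial.X + C 1 : ℚ[X]) ^ 11) ≠ 0 := pow_ne_zero _ (X_add_C_ne_zero 1)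
    have hlt : ((Polynomial.X + C 1 : ℚ[X]) ^ 11).degree < (q O).degree := by
      apply degree_lt_degree
      rw [hQ]
      exact hdeg
    have ht := (abs_div_tendsto_atTop_atTop_of_degree_gt _ _ hlt hQ0).comp
      (tendsto_natCast_atTop_atTop (R := ℚ))
    obtain ⟨n, hn⟩ := (ht.eventually_gt_atTop 1).exists
    simp only [Function.comp] at hn
    rw [← hall] at hn
    have hle : (N O n : ℚ) ≤ ((n : ℚ) + 1) ^ 11 := by exact_mod_cast N_O_le n
    simp only [eval_pow, eval_add, eval_X, eval_C] at hn
    have hp : (0 : ℚ) < ((n : ℚ) + 1) ^ 11 := by positivity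
    rw [abs_of_nonneg (by positivity), lt_div_iff₀ hp] at hn
    linarith
  · have := hz 3 (by norm_num) (by norm_num)
    norm_num at this
    exact this
  · have := hz 2 (by norm_num) (by norm_num)
    norm_num at this
    exact this
  · have := hz 1 (by norm_num) (by norm_num)
    norm_num at this
    exact this

end Soccer

namespace Soccer

open Finset

/-- Summation by recursion, for kernel evaluation. -/
noncomputable def sumTo (f : ℕ → ℕ) (n : ℕ) : ℕ :=
  Nat.rec 0 (fun k acc => acc + f k) n

lemma sumTo_eq (f : ℕ → ℕ) (n : ℕ) : sumTo f n = ∑ k ∈ range n, f k := by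
  induction n with
  | zero => rfl
  | succ n ih => rw [sum_range_succ, ← ih]; rfl

/-- Evaluate `n` before passing it to `f`. -/
noncomputable def force (n : ℕ) (f : ℕ → ℕ) : ℕ :=
  Nat.rec (f 0) (fun k _ => f (k + 1)) n

lemma force_eq (n : ℕ) (f : ℕ → ℕ) : force n f = f n := by
  cases n <;> rfl

/-- Table lookup. -/
noncomputable def lk (l : List ℕ) : ℕ → ℕ :=
  List.rec (fun _ => 0) (fun a _ ih i => Nat.rec a (fun k _ => ih k) i) l

lemma lk_eq (l : List ℕ) (i : ℕ) : lk l i = l.getD i 0 := by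
  induction l generalizing i with
  | nil => rfl
  | cons a l ih =>
    cases i with
    | zero => rfl
    | succ i => rw [List.getD_cons_succ, ← ih]; rfl

/-- Build the table `[f 0, …, f (n-1)] ++ acc` and pass it on. -/
noncomputable def build (f : ℕ → ℕ) (n : ℕ) (k : List ℕ → ℕ) : ℕ :=
  Nat.rec (motive := fun _ => List ℕ → ℕ) k
    (fun m ih acc => force (f m) fun v => ih (v :: acc)) n []

lemma build_eq (f : ℕ → ℕ) (n : ℕ) (k : List ℕ → ℕ) :
    build f n k = k ((List.range n).map f) := by
  have : ∀ acc, Nat.rec (motive := fun _ => List ℕ → ℕ) k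
    (fun m ih acc => force (f m) fun v => ih (v :: acc)) n acc =
      k ((List.range n).map f ++ acc) := by
    induction n with
    | zero => intro acc; rfl
    | succ n ih =>
      intro acc
      simp only [force_eq]
      simp only [force_eq] at ih
      rw [ih]
      simp [List.range_succ]
  rw [build, this, List.append_nil]

lemma lk_map (f : ℕ → ℕ) (n i : ℕ) (h : i < n) : lk ((List.range n).map f) i = f i := by
  rw [lk_eq, List.getD_eq_getElem _ _ (by simpa using h)]
  simp

/-- Weight of a vertex with deficit `r - p - q` taken from a table. -/
noncomputable def wt (r : ℕ) (t : List ℕ) (p q : ℕ) : ℕ :=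
  cond (Nat.ble (p + q) r) (lk t (r - (p + q))) 0

/-- Evaluation scheme for the number of matrices. -/
noncomputable def comp (r B D : ℕ) : ℕ :=
  force (B ^ D) fun q2 =>
  force (B ^ (D * D)) fun q3 =>
  build (fun m => sumTo (fun x => B ^ x * q2 ^ (m - x)) (m + 1)) (r + 1) fun t1 =>
  build (fun m => sumTo (fun y => q3 ^ y) (m + 1)) (r + 1) fun t2 =>
  build (fun i => sumTo (fun m => wt r t1 (i / (r + 1)) m * wt r t2 m (i % (r + 1))) (r + 1))
    ((r + 1) * (r + 1)) fun U =>
  force (sumTo (fun p => sumTo (fun q => lk U (p * (r + 1) + q) *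
    sumTo (fun s => lk U (q * (r + 1) + s) * lk U (s * (r + 1) + p)) (r + 1)) (r + 1))
      (r + 1)) fun F =>
  (sumTo (fun a => (q2 * q3) ^ a) (r + 1) * sumTo (fun b => B ^ b) (r + 1) * F) /
    B ^ (r + D * r + D * D * r) % B

end Soccer

namespace Soccer

open Finset

lemma kronecker {α : Type*} (s : Finset α) (e : α → ℕ) (B t : ℕ) (hB : s.card < B) :
    (∑ w ∈ s, B ^ e w) / B ^ t % B = (s.filter fun w => e w = t).card := by
  classical
  have hB0 : 0 < B := by omega
  have h1 : ∑ w ∈ s, B ^ e w = ∑ w ∈ s with e w = t, B ^ e w +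
      (∑ w ∈ s with e w < t, B ^ e w + ∑ w ∈ s with t < e w, B ^ e w) := by
    rw [← sum_filter_add_sum_filter_not s (fun w => e w = t)]
    congr 1
    rw [← sum_filter_add_sum_filter_not (s.filter fun w => ¬ e w = t) (fun w => e w < t),
      filter_filter, filter_filter]
    congr 1
    · refine sum_congr (filter_congr fun w _ => ?_) fun _ _ => rfl
      omega
    · refine sum_congr (filter_congr fun w _ => ?_) fun _ _ => rfl
      omega
  have h2 : ∑ w ∈ s with e w = t, B ^ e w = (s.filter fun w => e w = t).card * B ^ t := by
    rw [sum_congr rfl (fun w hw => by rw [(mem_filter.1 hw).2]), sum_const, smul_eq_mul]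
  have h3 : ∑ w ∈ s with e w < t, B ^ e w < B ^ t := by
    rcases Nat.eq_zero_or_pos t with rfl | ht
    · simp
    · obtain ⟨t, rfl⟩ : ∃ k, t = k + 1 := ⟨t - 1, by omega⟩
      calc ∑ w ∈ s with e w < t + 1, B ^ e w
          ≤ ∑ w ∈ s with e w < t + 1, B ^ t := by
            refine sum_le_sum fun w hw => Nat.pow_le_pow_right hB0 ?_
            have := (mem_filter.1 hw).2
            omega
        _ = (s.filter fun w => e w < t + 1).card * B ^ t := by rw [sum_const, smul_eq_mul]
        _ ≤ s.card * B ^ t := Nat.mul_le_mul_right _ (card_filter_le _ _)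
        _ < B * B ^ t := Nat.mul_lt_mul_of_pos_right hB (Nat.pow_pos hB0)
        _ = B ^ (t + 1) := by ring
  have h4 : B ^ (t + 1) ∣ ∑ w ∈ s with t < e w, B ^ e w := by
    refine dvd_sum fun w hw => pow_dvd_pow _ ?_
    have := (mem_filter.1 hw).2
    omega
  obtain ⟨K, hK⟩ := h4
  have h5 : (s.filter fun w => e w = t).card < B := lt_of_le_of_lt (card_filter_le _ _) hB
  rw [h1, h2, hK]
  set L := ∑ w ∈ s with e w < t, B ^ e w
  set n := (s.filter fun w => e w = t).card
  have : n * B ^ t + (L + B ^ (t + 1) * K) = L + B ^ t * (n + B * K) := by ring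
  rw [this, Nat.add_mul_div_left _ _ (Nat.pow_pos hB0), Nat.div_eq_of_lt h3, zero_add,
    Nat.add_mul_mod_self_left, Nat.mod_eq_of_lt h5]

/-- Parameter tuples `(a, b, e₁, …, e₆, x₂, x₃, x₄, y₂, y₃, y₄)`. -/
abbrev Tup : Type := ℕ × ℕ × ℕ × ℕ × ℕ × ℕ × ℕ × ℕ × ℕ × ℕ × ℕ × ℕ × ℕ × ℕ

/-- The box of all parameters between `0` and `r`. -/
def box (r : ℕ) : Finset Tup :=
  range (r + 1) ×ˢ range (r + 1) ×ˢ range (r + 1) ×ˢ range (r + 1) ×ˢ range (r + 1) ×ˢ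
  range (r + 1) ×ˢ range (r + 1) ×ˢ range (r + 1) ×ˢ range (r + 1) ×ˢ range (r + 1) ×ˢ
  range (r + 1) ×ˢ range (r + 1) ×ˢ range (r + 1) ×ˢ range (r + 1)

/-- The six line constraints of the hexagon. -/
def valid (r : ℕ) : Tup → Prop
  | (_, _, e1, e2, e3, e4, e5, e6, x2, x3, x4, y2, y3, y4) =>
    e6 + e1 + x2 ≤ r ∧ e4 + e5 + x3 ≤ r ∧ e2 + e3 + x4 ≤ r ∧
    e3 + e4 + y2 ≤ r ∧ e1 + e2 + y3 ≤ r ∧ e5 + e6 + y4 ≤ r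

instance (r : ℕ) : DecidablePred (valid r) := fun w => by
  unfold valid
  infer_instance

/-- Sum of column 0. -/
def u1 : Tup → ℕ
  | (_, b, _, _, _, _, _, _, x2, x3, x4, _, _, _) => b + x2 + x3 + x4

/-- Sum of column 1. -/
def u2 (r : ℕ) : Tup → ℕ
  | (a, _, e1, e2, e3, e4, e5, e6, x2, x3, x4, _, _, _) =>
    a + (r - (e6 + e1) - x2) + (r - (e4 + e5) - x3) + (r - (e2 + e3) - x4)

/-- Sum of row 0. -/
def u3 : Tup → ℕ
  | (a, _, _, _, _, _, _, _, _, _, _, y2, y3, y4) => a + y2 + y3 + y4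

/-- The matrix of a tuple. -/
def toM (r : ℕ) : Tup → (Fin 5 → Fin 5 → ℕ)
  | (a, b, e1, e2, e3, e4, e5, e6, x2, x3, x4, y2, y3, y4) =>
    ![![0, a, y2, y3, y4],
      ![b, 0, r - (e3 + e4) - y2, r - (e1 + e2) - y3, r - (e5 + e6) - y4],
      ![x2, r - (e6 + e1) - x2, 0, e1, e6],
      ![x3, r - (e4 + e5) - x3, e4, 0, e5],
      ![x4, r - (e2 + e3) - x4, e3, e2, 0]]

/-- The tuple of a matrix. -/
def ofM (M : Fin 5 → Fin 5 → ℕ) : Tup :=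
  (M 0 1, M 1 0, M 2 3, M 4 3, M 4 2, M 3 2, M 3 4, M 2 4, M 2 0, M 3 0, M 4 0,
    M 0 2, M 0 3, M 0 4)

set_option maxHeartbeats 1000000 in
lemma N_eq_card (r : ℕ) : N O r =
    (((box r).filter (valid r)).filter fun w => u1 w = r ∧ u2 r w = r ∧ u3 w = r).card := by
  unfold N
  refine card_nbij' ofM (toM r) ?_ ?_ ?_ ?_
  · intro M hM
    have hM := mem_filter.1 hM
    have d : ∀ i, M i i = 0 := fun i => hM.2 (i, i) (by simp [O])
    have e := mem_Mat.1 hM.1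
    simp only [Fin.forall_fin_succ, Fin.sum_univ_five] at d e
    simp at d e
    refine mem_filter.2 ⟨mem_filter.2 ⟨?_, ?_⟩, ?_⟩
    · simp only [ofM, box, mem_product, mem_range]
      omega
    · simp only [ofM, valid]
      omega
    · simp only [ofM, u1, u2, u3]
      omega
  · rintro ⟨a, b, e1, e2, e3, e4, e5, e6, x2, x3, x4, y2, y3, y4⟩ hw
    have hw1 := mem_filter.1 hw
    have hw2 := mem_filter.1 hw1.1
    obtain ⟨-, hw3⟩ := hw2
    obtain ⟨-, hw4⟩ := hw1
    simp only [valid, u1, u2, u3] at hw3 hw4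
    simp only [coe_filter, Set.mem_ofPred_eq, mem_Mat]
    refine ⟨⟨?_, ?_⟩, ?_⟩
    · simp [Fin.forall_fin_succ, Fin.sum_univ_five, toM]
      omega
    · simp [Fin.forall_fin_succ, Fin.sum_univ_five, toM]
      omega
    · rintro ⟨i, j⟩ hc
      have : i = j := by simpa [O] using hc
      subst this
      fin_cases i <;> simp [toM]
  · intro M hM
    have hM := mem_filter.1 hM
    have d : ∀ i, M i i = 0 := fun i => hM.2 (i, i) (by simp [O])
    have e := mem_Mat.1 hM.1
    simp only [Fin.forall_fin_succ, Fin.sum_univ_five] at d e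
    simp at d e
    funext i j
    fin_cases i <;> fin_cases j <;> simp [toM, ofM] <;> omega
  · rintro ⟨a, b, e1, e2, e3, e4, e5, e6, x2, x3, x4, y2, y3, y4⟩ hw
    simp [ofM, toM]

lemma digits_iff (r v1 v2 v3 : ℕ) (h1 : v1 ≤ 4 * r) (h2 : v2 ≤ 4 * r) :
    v1 + (3 * r + 1) * v2 + (3 * r + 1) * (3 * r + 1) * v3 =
      r + (3 * r + 1) * r + (3 * r + 1) * (3 * r + 1) * r ↔ v1 = r ∧ v2 = r ∧ v3 = r := by
  constructor
  · intro h
    have hz : ((v1 : ℤ) - r) + (3 * r + 1) * ((v2 - r) + (3 * r + 1) * (v3 - r)) = 0 := by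
      zify at h
      linear_combination h
    have k1 : (v1 : ℤ) - r = 0 := by
      apply Int.eq_zero_of_abs_lt_dvd (m := 3 * r + 1)
      · exact ⟨-((v2 - r) + (3 * r + 1) * (v3 - r)), by linear_combination hz⟩
      · rw [abs_lt]
        constructor <;> omega
    rw [k1, zero_add, mul_eq_zero] at hz
    have hz := hz.resolve_left (by omega)
    have k2 : (v2 : ℤ) - r = 0 := by
      apply Int.eq_zero_of_abs_lt_dvd (m := 3 * r + 1)
      · exact ⟨-(v3 - r), by linear_combination hz⟩
      · rw [abs_lt]
        constructor <;> omega
    rw [k2, zero_add, mul_eq_zero] at hz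
    have hz := hz.resolve_left (by omega)
    omega
  · rintro ⟨rfl, rfl, rfl⟩
    rfl

lemma N_eq_coeff (r B : ℕ) (hB : (r + 1) ^ 14 < B) : N O r =
    (∑ w ∈ (box r).filter (valid r),
      B ^ (u1 w + (3 * r + 1) * u2 r w + (3 * r + 1) * (3 * r + 1) * u3 w)) /
    B ^ (r + (3 * r + 1) * r + (3 * r + 1) * (3 * r + 1) * r) % B := by
  rw [kronecker, N_eq_card]
  · congr 1
    refine filter_congr ?_
    rintro ⟨a, b, e1, e2, e3, e4, e5, e6, x2, x3, x4, y2, y3, y4⟩ hw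
    rw [digits_iff]
    · simp [box, valid, u1] at hw ⊢
      omega
    · simp [box, valid, u2] at hw ⊢
      omega
  · refine lt_of_le_of_lt (card_filter_le _ _) (lt_of_eq_of_lt ?_ hB)
    simp only [box, card_product, card_range]
    ring

/-- Row vertex weight. -/
def Rw (r q1 q2 p q : ℕ) : ℕ :=
  ∑ x ∈ range (r + 1), if p + q + x ≤ r then q1 ^ x * q2 ^ (r - (p + q) - x) else 0

/-- Column vertex weight. -/
def Cw (r q3 p q : ℕ) : ℕ :=
  ∑ y ∈ range (r + 1), if p + q + y ≤ r then q3 ^ y else 0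

lemma six_sum (s : Finset ℕ) (K : ℕ) (f1 f2 f3 f4 f5 f6 : ℕ → ℕ) :
    ∑ x1 ∈ s, ∑ x2 ∈ s, ∑ x3 ∈ s, ∑ x4 ∈ s, ∑ x5 ∈ s, ∑ x6 ∈ s,
      K * (f1 x1 * f2 x2 * f3 x3 * f4 x4 * f5 x5 * f6 x6) =
    K * ((∑ x ∈ s, f1 x) * (∑ x ∈ s, f2 x) * (∑ x ∈ s, f3 x) * (∑ x ∈ s, f4 x) *
      (∑ x ∈ s, f5 x) * (∑ x ∈ s, f6 x)) := by
  simp only [← mul_sum, ← sum_mul]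

lemma coeff_sum_eq (r B D : ℕ) :
    (∑ w ∈ (box r).filter (valid r), B ^ (u1 w + D * u2 r w + D * D * u3 w)) =
    ∑ a ∈ range (r + 1), ∑ b ∈ range (r + 1),
    ∑ e1 ∈ range (r + 1), ∑ e2 ∈ range (r + 1), ∑ e3 ∈ range (r + 1),
    ∑ e4 ∈ range (r + 1), ∑ e5 ∈ range (r + 1), ∑ e6 ∈ range (r + 1),
      (B ^ D * B ^ (D * D)) ^ a * B ^ b *
      (Rw r B (B ^ D) e6 e1 * Rw r B (B ^ D) e4 e5 * Rw r B (B ^ D) e2 e3 *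
        Cw r (B ^ (D * D)) e3 e4 * Cw r (B ^ (D * D)) e1 e2 * Cw r (B ^ (D * D)) e5 e6) := by
  rw [sum_filter, box]
  rw [sum_product]
  refine sum_congr rfl fun a _ => ?_
  rw [sum_product]
  refine sum_congr rfl fun b _ => ?_
  rw [sum_product]
  refine sum_congr rfl fun e1 _ => ?_
  rw [sum_product]
  refine sum_congr rfl fun e2 _ => ?_
  rw [sum_product]
  refine sum_congr rfl fun e3 _ => ?_
  rw [sum_product]
  refine sum_congr rfl fun e4 _ => ?_
  rw [sum_product]
  refine sum_congr rfl fun e5 _ => ?_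
  rw [sum_product]
  refine sum_congr rfl fun e6 _ => ?_
  have : ∀ x2 x3 x4 y2 y3 y4 : ℕ,
    (if valid r (a, b, e1, e2, e3, e4, e5, e6, x2, x3, x4, y2, y3, y4) then
      B ^ (u1 (a, b, e1, e2, e3, e4, e5, e6, x2, x3, x4, y2, y3, y4) +
        D * u2 r (a, b, e1, e2, e3, e4, e5, e6, x2, x3, x4, y2, y3, y4) +
        D * D * u3 (a, b, e1, e2, e3, e4, e5, e6, x2, x3, x4, y2, y3, y4)) else 0) =
    (B ^ D * B ^ (D * D)) ^ a * B ^ b *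
      ((if e6 + e1 + x2 ≤ r then B ^ x2 * (B ^ D) ^ (r - (e6 + e1) - x2) else 0) *
      (if e4 + e5 + x3 ≤ r then B ^ x3 * (B ^ D) ^ (r - (e4 + e5) - x3) else 0) *
      (if e2 + e3 + x4 ≤ r then B ^ x4 * (B ^ D) ^ (r - (e2 + e3) - x4) else 0) *
      (if e3 + e4 + y2 ≤ r then (B ^ (D * D)) ^ y2 else 0) *
      (if e1 + e2 + y3 ≤ r then (B ^ (D * D)) ^ y3 else 0) *
      (if e5 + e6 + y4 ≤ r then (B ^ (D * D)) ^ y4 else 0)) := by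
    intro x2 x3 x4 y2 y3 y4
    simp only [← ite_and, ite_mul, mul_ite, mul_zero, zero_mul]
    by_cases h : valid r (a, b, e1, e2, e3, e4, e5, e6, x2, x3, x4, y2, y3, y4)
    · rw [if_pos h]
      simp only [valid] at h
      obtain ⟨k1, k2, k3, k4, k5, k6⟩ := h
      simp only [k1, k2, k3, k4, k5, k6, and_self, if_true, u1, u2, u3]
      simp only [← pow_mul, ← pow_add]
      congr 1
      ring
    · rw [if_neg h, if_neg]
      simp only [valid] at h
      tauto
  refine Eq.trans ?_ (six_sum (range (r + 1)) ((B ^ D * B ^ (D * D)) ^ a * B ^ b)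
    (fun x => if e6 + e1 + x ≤ r then B ^ x * (B ^ D) ^ (r - (e6 + e1) - x) else 0)
    (fun x => if e4 + e5 + x ≤ r then B ^ x * (B ^ D) ^ (r - (e4 + e5) - x) else 0)
    (fun x => if e2 + e3 + x ≤ r then B ^ x * (B ^ D) ^ (r - (e2 + e3) - x) else 0)
    (fun x => if e3 + e4 + x ≤ r then (B ^ (D * D)) ^ x else 0)
    (fun x => if e1 + e2 + x ≤ r then (B ^ (D * D)) ^ x else 0)
    (fun x => if e5 + e6 + x ≤ r then (B ^ (D * D)) ^ x else 0))
  rw [sum_product]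
  refine sum_congr rfl fun x2 _ => ?_
  rw [sum_product]
  refine sum_congr rfl fun x3 _ => ?_
  rw [sum_product]
  refine sum_congr rfl fun x4 _ => ?_
  rw [sum_product]
  refine sum_congr rfl fun y2 _ => ?_
  rw [sum_product]
  refine sum_congr rfl fun y3 _ => ?_
  refine sum_congr rfl fun y4 _ => ?_
  exact this x2 x3 x4 y2 y3 y4

lemma wt_eq (r : ℕ) (f : ℕ → ℕ) (p q : ℕ) :
    wt r ((List.range (r + 1)).map f) p q = if p + q ≤ r then f (r - (p + q)) else 0 := by
  unfold wt
  by_cases h : p + q ≤ r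
  · rw [if_pos h, Nat.ble_eq_true_of_le h, cond_true, lk_map _ _ _ (by omega)]
  · rw [if_neg h]
    have : Nat.ble (p + q) r = false := by
      rw [← Bool.not_eq_true, Nat.ble_eq]
      exact h
    rw [this, cond_false]

lemma range_if (r k : ℕ) (f : ℕ → ℕ) :
    (if k ≤ r then ∑ x ∈ range (r - k + 1), f x else 0) =
      ∑ x ∈ range (r + 1), if k + x ≤ r then f x else 0 := by
  rw [← sum_filter]
  by_cases h : k ≤ r
  · rw [if_pos h]
    refine sum_congr ?_ fun _ _ => rfl
    ext x
    simp only [mem_range, mem_filter]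
    omega
  · rw [if_neg h]
    symm
    apply sum_eq_zero
    intro x hx
    have := (mem_filter.1 hx).2
    omega

lemma hexagon (n : ℕ) (R C : ℕ → ℕ → ℕ) (f g : ℕ → ℕ) :
    ∑ a ∈ range n, ∑ b ∈ range n,
    ∑ e1 ∈ range n, ∑ e2 ∈ range n, ∑ e3 ∈ range n,
    ∑ e4 ∈ range n, ∑ e5 ∈ range n, ∑ e6 ∈ range n,
      f a * g b * (R e6 e1 * R e4 e5 * R e2 e3 * C e3 e4 * C e1 e2 * C e5 e6) =
    (∑ a ∈ range n, f a) * (∑ b ∈ range n, g b) *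
      ∑ p ∈ range n, ∑ q ∈ range n, (∑ m ∈ range n, R p m * C m q) *
        ∑ s ∈ range n, (∑ m ∈ range n, R q m * C m s) * (∑ m ∈ range n, R s m * C m p) := by
  simp only [← mul_sum, ← sum_mul]
  congr 1
  have hl : ∀ e1 e2 e3 e4 : ℕ, ∑ e5 ∈ range n, ∑ e6 ∈ range n,
      R e6 e1 * R e4 e5 * R e2 e3 * C e3 e4 * C e1 e2 * C e5 e6 =
      ∑ e6 ∈ range n, R e6 e1 * C e1 e2 * (R e2 e3 * C e3 e4) *
        (∑ e5 ∈ range n, R e4 e5 * C e5 e6) := by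
    intro e1 e2 e3 e4
    rw [sum_comm]
    refine sum_congr rfl fun e6 _ => ?_
    rw [mul_sum]
    refine sum_congr rfl fun e5 _ => ?_
    ring
  simp only [hl]
  have hr : ∀ p q : ℕ, (∑ m ∈ range n, R p m * C m q) *
        (∑ s ∈ range n, (∑ m ∈ range n, R q m * C m s) * (∑ m ∈ range n, R s m * C m p)) =
      ∑ e1 ∈ range n, ∑ e3 ∈ range n, ∑ e4 ∈ range n,
        R p e1 * C e1 q * (R q e3 * C e3 e4) * (∑ m ∈ range n, R e4 m * C m p) := by
    intro p q
    rw [sum_mul]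
    refine sum_congr rfl fun e1 _ => ?_
    rw [mul_sum, sum_comm]
    refine sum_congr rfl fun s _ => ?_
    rw [sum_mul, mul_sum]
    refine sum_congr rfl fun e3 _ => ?_
    ring
  simp only [hr]
  -- LHS order: e1 e2 e3 e4 e6;  RHS order: e6 e2 e1 e3 e4
  have m1 : ∀ F : ℕ → ℕ → ℕ → ℕ → ℕ → ℕ,
      ∑ e1 ∈ range n, ∑ e2 ∈ range n, ∑ e3 ∈ range n, ∑ e4 ∈ range n, ∑ e6 ∈ range n,
        F e1 e2 e3 e4 e6 =
      ∑ e6 ∈ range n, ∑ e2 ∈ range n, ∑ e1 ∈ range n, ∑ e3 ∈ range n, ∑ e4 ∈ range n,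
        F e1 e2 e3 e4 e6 := by
    intro F
    calc _ = ∑ e1 ∈ range n, ∑ e2 ∈ range n, ∑ e3 ∈ range n, ∑ e6 ∈ range n, ∑ e4 ∈ range n,
          F e1 e2 e3 e4 e6 := sum_congr rfl fun e1 _ => sum_congr rfl fun e2 _ =>
            sum_congr rfl fun e3 _ => sum_comm
      _ = ∑ e1 ∈ range n, ∑ e2 ∈ range n, ∑ e6 ∈ range n, ∑ e3 ∈ range n, ∑ e4 ∈ range n,
          F e1 e2 e3 e4 e6 := sum_congr rfl fun e1 _ => sum_congr rfl fun e2 _ => sum_comm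
      _ = ∑ e1 ∈ range n, ∑ e6 ∈ range n, ∑ e2 ∈ range n, ∑ e3 ∈ range n, ∑ e4 ∈ range n,
          F e1 e2 e3 e4 e6 := sum_congr rfl fun e1 _ => sum_comm
      _ = ∑ e6 ∈ range n, ∑ e1 ∈ range n, ∑ e2 ∈ range n, ∑ e3 ∈ range n, ∑ e4 ∈ range n,
          F e1 e2 e3 e4 e6 := sum_comm
      _ = _ := sum_congr rfl fun e6 _ => sum_comm
  exact m1 _

lemma comp_eq (r B : ℕ) (hB : (r + 1) ^ 14 < B) : comp r B (3 * r + 1) = N O r := by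
  rw [N_eq_coeff r B hB, coeff_sum_eq,
    hexagon (r + 1) (Rw r B (B ^ (3 * r + 1))) (Cw r (B ^ ((3 * r + 1) * (3 * r + 1))))
      (fun a => (B ^ (3 * r + 1) * B ^ ((3 * r + 1) * (3 * r + 1))) ^ a) (fun b => B ^ b)]
  generalize 3 * r + 1 = D
  unfold comp
  simp only [force_eq, build_eq, sumTo_eq, wt_eq]
  have hR : ∀ p q, (if p + q ≤ r then
      ∑ x ∈ range (r - (p + q) + 1), B ^ x * (B ^ D) ^ (r - (p + q) - x) else 0) =
      Rw r B (B ^ D) p q := fun p q => range_if r (p + q) _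
  have hC : ∀ p q, (if p + q ≤ r then
      ∑ y ∈ range (r - (p + q) + 1), (B ^ (D * D)) ^ y else 0) =
      Cw r (B ^ (D * D)) p q := fun p q => range_if r (p + q) _
  simp only [hR, hC]
  have hU : ∀ f : ℕ → ℕ → ℕ, ∀ i ∈ range (r + 1), ∀ j ∈ range (r + 1),
      lk ((List.range ((r + 1) * (r + 1))).map fun k => f (k / (r + 1)) (k % (r + 1)))
        (i * (r + 1) + j) = f i j := by
    intro f i hi j hj
    rw [mem_range] at hi hj
    rw [lk_map]
    · congr 1
      · rw [mul_comm, Nat.mul_add_div (by omega), Nat.div_eq_of_lt hj, add_zero]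
      · rw [mul_comm, Nat.mul_add_mod, Nat.mod_eq_of_lt hj]
    · nlinarith
  have hU' := hU fun p q => ∑ m ∈ range (r + 1),
    Rw r B (B ^ D) p m * Cw r (B ^ (D * D)) m q
  congr 3
  refine sum_congr rfl fun p hp => sum_congr rfl fun q hq => ?_
  rw [hU' p hp q hq]
  congr 1
  refine sum_congr rfl fun s hs => ?_
  rw [hU' q hq s hs, hU' s hs p hp]

lemma S_val (r v : ℕ) (hr : r ≤ 8) (h : comp r (2 ^ 45) (3 * r + 1) = v) : S 5 r = v := by
  rw [S_eq, ← h, comp_eq]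
  calc (r + 1) ^ 14 ≤ 9 ^ 14 := Nat.pow_le_pow_left (by omega) _
    _ < 2 ^ 45 := by norm_num

open Polynomial in
lemma S_five_aux (r : ℕ) :
    (241920 * S 5 r : ℚ) =
      (r + 1) * (r + 2) * (r + 3) *
        (43 * r ^ 8 + 688 * r ^ 7 + 4934 * r ^ 6 + 20680 * r ^ 5 + 55907 * r ^ 4 +
          101272 * r ^ 3 + 123436 * r ^ 2 + 96240 * r + 40320) := by
  obtain ⟨p, hp, hdeg, h1, h2, h3⟩ := exists_poly_S
  have s0 : S 5 0 = 1 := S_val _ _ (by norm_num) (by decide +kernel)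
  have s1 : S 5 1 = 44 := S_val _ _ (by norm_num) (by decide +kernel)
  have s2 : S 5 2 = 870 := S_val _ _ (by norm_num) (by decide +kernel)
  have s3 : S 5 3 = 9480 := S_val _ _ (by norm_num) (by decide +kernel)
  have s4 : S 5 4 = 68290 := S_val _ _ (by norm_num) (by decide +kernel)
  have s5 : S 5 5 = 365936 := S_val _ _ (by norm_num) (by decide +kernel)
  have s6 : S 5 6 = 1573374 := S_val _ _ (by norm_num) (by decide +kernel)
  have s7 : S 5 7 = 5709120 := S_val _ _ (by norm_num) (by decide +kernel)
  have s8 : S 5 8 = 18107760 := S_val _ _ (by norm_num) (by decide +kernel)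
  have p0 := hp 0
  have p1 := hp 1
  have p2 := hp 2
  have p3 := hp 3
  have p4 := hp 4
  have p5 := hp 5
  have p6 := hp 6
  have p7 := hp 7
  have p8 := hp 8
  rw [s0] at p0
  rw [s1] at p1
  rw [s2] at p2
  rw [s3] at p3
  rw [s4] at p4
  rw [s5] at p5
  rw [s6] at p6
  rw [s7] at p7
  rw [s8] at p8
  push_cast at p0 p1 p2 p3 p4 p5 p6 p7 p8
  set Q : ℚ[X] := (X + 1) * (X + 2) * (X + 3) *
        (43 * X ^ 8 + 688 * X ^ 7 + 4934 * X ^ 6 + 20680 * X ^ 5 + 55907 * X ^ 4 +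
          101272 * X ^ 3 + 123436 * X ^ 2 + 96240 * X + 40320) with hQ
  have hQe : ∀ x : ℚ, Q.eval x = (x + 1) * (x + 2) * (x + 3) *
        (43 * x ^ 8 + 688 * x ^ 7 + 4934 * x ^ 6 + 20680 * x ^ 5 + 55907 * x ^ 4 +
          101272 * x ^ 3 + 123436 * x ^ 2 + 96240 * x + 40320) := by
    intro x
    simp [hQ]
  have hQd : Q.natDegree ≤ 11 := by
    rw [hQ]
    compute_degree
  have key : C 241920 * p - Q = 0 := by
    refine eq_zero_of_natDegree_lt_card_of_eval_eq_zero' _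
      ({0, 1, 2, 3, 4, 5, 6, 7, 8, -1, -2, -3} : Finset ℚ) ?_ ?_
    · intro x hx
      simp only [mem_insert, mem_singleton] at hx
      rw [eval_sub, eval_mul, eval_C, hQe]
      rcases hx with rfl | rfl | rfl | rfl | rfl | rfl | rfl | rfl | rfl | rfl | rfl | rfl
      · rw [← p0]; norm_num
      · rw [← p1]; norm_num
      · rw [← p2]; norm_num
      · rw [← p3]; norm_num
      · rw [← p4]; norm_num
      · rw [← p5]; norm_num
      · rw [← p6]; norm_num
      · rw [← p7]; norm_num
      · rw [← p8]; norm_num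
      · rw [h1]; norm_num
      · rw [h2]; norm_num
      · rw [h3]; norm_num
    · have hc : ({0, 1, 2, 3, 4, 5, 6, 7, 8, -1, -2, -3} : Finset ℚ).card = 12 := by
        decide +kernel
      rw [hc]
      refine lt_of_le_of_lt (natDegree_sub_le _ _) ?_
      have := natDegree_C_mul_le (241920 : ℚ) p
      have := max_le (this.trans hdeg) hQd
      omega
  rw [hp, ← hQe]
  have := congrArg (eval (r : ℚ)) key
  rw [eval_sub, eval_mul, eval_C, eval_zero] at this
  linarith

end Soccer
theorem S_five (r : ℕ) :
    241920 * S 5 r =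
      (r + 1) * (r + 2) * (r + 3) *
        (43 * r ^ 8 + 688 * r ^ 7 + 4934 * r ^ 6 + 20680 * r ^ 5 + 55907 * r ^ 4 +
          101272 * r ^ 3 + 123436 * r ^ 2 + 96240 * r + 40320) := by
  exact_mod_cast Soccer.S_five_aux r
end

section
/- For every fixed integer n ≥ 3 there exists a polynomial P with rational coefficients of degree n² − 3n + 1 such that P(r) = S_n(r) for every natural number r. -/
open Finset

/-- Matrices vanishing on `Z` with all row and column sums `r`. -/
def AA (n : ℕ) (Z : Finset (Fin n × Fin n)) (r : ℕ) : Finset (Fin n → Fin n → ℕ) :=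
  (Fintype.piFinset fun _ => Fintype.piFinset fun _ => range (r + 1)).filter fun M =>
    (∀ p ∈ Z, M p.1 p.2 = 0) ∧ (∀ i, ∑ j, M i j = r) ∧ (∀ j, ∑ i, M i j = r)

theorem mem_AA {n : ℕ} {Z : Finset (Fin n × Fin n)} {r : ℕ} {M : Fin n → Fin n → ℕ} :
    M ∈ AA n Z r ↔
      (∀ p ∈ Z, M p.1 p.2 = 0) ∧ (∀ i, ∑ j, M i j = r) ∧ (∀ j, ∑ i, M i j = r) := by
  unfold AA
  rw [mem_filter]
  refine ⟨fun h => h.2, fun h => ⟨?_, h⟩⟩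
  simp only [Fintype.mem_piFinset, mem_range]
  intro i j
  have := single_le_sum (f := fun j => M i j) (fun _ _ => Nat.zero_le _) (mem_univ j)
  have h2 := h.2.1 i
  omega

theorem S_eq_card (n r : ℕ) : S n r = (AA n (univ.filter fun p => p.1 = p.2) r).card := by
  unfold S
  refine Nat.subtype_card (α := Fin n → Fin n → ℕ) _ ?_
  intro M
  rw [mem_AA]
  simp

theorem exists_perm {n : ℕ} {Z : Finset (Fin n × Fin n)} {r : ℕ} {M : Fin n → Fin n → ℕ}
    (hr : 1 ≤ r) (hM : M ∈ AA n Z r) : ∃ σ : Equiv.Perm (Fin n), ∀ i, (i, σ i) ∉ Z := by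
  rw [mem_AA] at hM
  obtain ⟨h0, h1, h2⟩ := hM
  have hr' : (r : ℚ) ≠ 0 := by positivity
  have hds : (Matrix.of fun i j => (M i j : ℚ) / r) ∈ doublyStochastic ℚ (Fin n) := by
    rw [mem_doublyStochastic_iff_sum]
    refine ⟨fun i j => by simp; positivity, fun i => ?_, fun j => ?_⟩
    · simp only [Matrix.of_apply]
      rw [← sum_div, div_eq_one_iff_eq hr']
      exact_mod_cast h1 i
    · simp only [Matrix.of_apply]
      rw [← sum_div, div_eq_one_iff_eq hr']
      exact_mod_cast h2 j
  obtain ⟨w, hw, hw1, hw2⟩ := exists_eq_sum_perm_of_mem_doublyStochastic hds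
  have : ∃ σ, w σ ≠ 0 := by
    by_contra! h
    simp [h] at hw1
  obtain ⟨σ, hσ⟩ := this
  refine ⟨σ, fun i hi => hσ ?_⟩
  have e := congrFun (congrFun hw2 i) (σ i)
  rw [Matrix.sum_apply] at e
  simp only [Matrix.of_apply, Matrix.smul_apply, h0 _ hi] at e
  simp only [Nat.cast_zero, zero_div] at e
  rw [sum_eq_zero_iff_of_nonneg] at e
  · have := e σ (mem_univ _)
    simpa [Equiv.Perm.permMatrix, PEquiv.toMatrix_apply] using this
  · intro τ _
    have := hw τ
    simp only [Equiv.Perm.permMatrix, PEquiv.toMatrix_apply, smul_eq_mul]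
    split_ifs <;> simp [this]

theorem step {n : ℕ} {Z : Finset (Fin n × Fin n)} (σ : Equiv.Perm (Fin n))
    (hσ : ∀ i, (i, σ i) ∉ Z) (r : ℕ) :
    (AA n Z (r + 1)).card = (AA n Z r).card +
      ((univ : Finset (Fin n)).biUnion fun i => AA n (insert (i, σ i) Z) (r + 1)).card := by
  rw [← card_filter_add_card_filter_not (s := AA n Z (r+1)) (fun M => ∀ i, M i (σ i) ≠ 0)]
  congr 1
  · symm
    apply card_bij (fun M _ => fun i j => M i j + if σ i = j then 1 else 0)
    · intro M hM
      rw [mem_AA] at hM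
      obtain ⟨h0, h1, h2⟩ := hM
      rw [mem_filter, mem_AA]
      refine ⟨⟨?_, ?_, ?_⟩, ?_⟩
      · rintro ⟨i, j⟩ hp
        have : σ i ≠ j := by rintro rfl; exact hσ i hp
        simpa [this] using h0 _ hp
      · intro i; simp [sum_add_distrib, h1]
      · intro j
        have : ∀ i, (σ i = j) ↔ i = σ.symm j := fun i => by
          rw [Equiv.eq_symm_apply]
        simp [sum_add_distrib, h2, this]
      · intro i; simp
    · intro M _ N _ h
      funext i j
      have := congrFun (congrFun h i) j
      simpa using this
    · intro M hM
      rw [mem_filter, mem_AA] at hM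
      obtain ⟨⟨h0, h1, h2⟩, h3⟩ := hM
      have key : ∀ i j, (M i j - if σ i = j then 1 else 0) + (if σ i = j then 1 else 0) = M i j := by
        intro i j
        split_ifs with h
        · have := h3 i; rw [h] at this; omega
        · rfl
      refine ⟨fun i j => M i j - if σ i = j then 1 else 0, ?_, ?_⟩
      · rw [mem_AA]
        refine ⟨fun p hp => by simp [h0 p hp], fun i => ?_, fun j => ?_⟩
        · have := h1 i
          rw [← sum_congr rfl (fun j _ => key i j), sum_add_distrib] at this
          simpa using this
        · have := h2 j
          rw [← sum_congr rfl (fun i _ => key i j), sum_add_distrib] at this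
          have e : ∀ i, (σ i = j) ↔ i = σ.symm j := fun i => by
            rw [Equiv.eq_symm_apply]
          simpa [e] using this
      · funext i j; exact key i j
  · congr 1
    ext M
    simp only [mem_filter, mem_biUnion, mem_AA, mem_univ, true_and, mem_insert, forall_eq_or_imp]
    push Not
    constructor
    · rintro ⟨⟨h0, h1, h2⟩, i, hi⟩; exact ⟨i, ⟨hi, h0⟩, h1, h2⟩
    · rintro ⟨i, ⟨hi, h0⟩, h1, h2⟩; exact ⟨⟨h0, h1, h2⟩, i, hi⟩

theorem inf_AA {n : ℕ} {Z : Finset (Fin n × Fin n)} (σ : Equiv.Perm (Fin n)) (r : ℕ)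
    (t : Finset (Fin n)) (ht : t.Nonempty) :
    t.inf' ht (fun i => AA n (insert (i, σ i) Z) r) = AA n (Z ∪ t.image fun i => (i, σ i)) r := by
  ext M
  rw [mem_inf']
  simp only [mem_AA, mem_insert, forall_eq_or_imp, mem_union, mem_image]
  constructor
  · intro h
    obtain ⟨i, hi⟩ := ht
    refine ⟨?_, (h i hi).2⟩
    rintro p (hp | ⟨j, hj, rfl⟩)
    · exact (h i hi).1.2 p hp
    · exact (h j hj).1.1
  · rintro ⟨h0, h1⟩ i hi
    exact ⟨⟨h0 _ (Or.inr ⟨i, hi, rfl⟩), fun p hp => h0 p (Or.inl hp)⟩, h1⟩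

theorem poly_sum (P : Polynomial ℚ) :
    ∃ Q : Polynomial ℚ, ∀ r : ℕ, Q.eval (r : ℚ) = ∑ s ∈ range r, P.eval (s : ℚ) := by
  induction P using Polynomial.induction_on' with
  | add p q hp hq =>
    obtain ⟨P', hP⟩ := hp
    obtain ⟨Q', hQ⟩ := hq
    exact ⟨P' + Q', fun r => by simp [hP, hQ, sum_add_distrib]⟩
  | monomial m a =>
    refine ⟨Polynomial.C (a / (m + 1)) *
      (Polynomial.bernoulli m.succ - Polynomial.C (_root_.bernoulli m.succ)), fun r => ?_⟩
    have := Polynomial.sum_range_pow_eq_bernoulli_sub r m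
    simp only [Polynomial.eval_mul, Polynomial.eval_C, Polynomial.eval_sub,
      Polynomial.eval_monomial, ← mul_sum]
    rw [← this]
    have : (m + 1 : ℚ) ≠ 0 := by positivity
    field_simp

theorem poly_main {n : ℕ} (Z : Finset (Fin n × Fin n)) :
    (∃ P : Polynomial ℚ, ∀ r : ℕ, 1 ≤ r → P.eval (r : ℚ) = (AA n Z r).card) ∧
    ((∃ σ : Equiv.Perm (Fin n), ∀ i, (i, σ i) ∉ Z) →
      ∃ P : Polynomial ℚ, ∀ r : ℕ, P.eval (r : ℚ) = (AA n Z r).card) := by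
  induction hk : (Zᶜ).card using Nat.strong_induction_on generalizing Z with
  | _ k ih =>
  have main : (∃ σ : Equiv.Perm (Fin n), ∀ i, (i, σ i) ∉ Z) →
      ∃ P : Polynomial ℚ, ∀ r : ℕ, P.eval (r : ℚ) = (AA n Z r).card := by
    rintro ⟨σ, hσ⟩
    have h1 : ∀ t : Finset (Fin n), t.Nonempty → ∃ P : Polynomial ℚ, ∀ r : ℕ, 1 ≤ r →
        P.eval (r : ℚ) = (AA n (Z ∪ t.image fun i => (i, σ i)) r).card := by
      intro t ht
      refine (ih _ ?_ (Z ∪ t.image fun i => (i, σ i)) rfl).1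
      rw [← hk]
      apply card_lt_card
      rw [compl_ssubset_compl]
      obtain ⟨i, hi⟩ := ht
      refine ⟨subset_union_left, fun h => hσ i (h ?_)⟩
      exact mem_union_right _ (mem_image_of_mem _ hi)
    choose! P hP using h1
    have h2 : ∃ G : Polynomial ℚ, ∀ s : ℕ, G.eval (s : ℚ) =
        ((univ : Finset (Fin n)).biUnion fun i => AA n (insert (i, σ i) Z) (s + 1)).card := by
      refine ⟨(∑ t : (univ : Finset (Fin n)).powerset.filter (fun t : Finset (Fin n) => t.Nonempty),
        Polynomial.C ((-1) ^ (#t.1 + 1)) * P t.1).comp (Polynomial.X + 1), fun s => ?_⟩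
      have e := inclusion_exclusion_card_biUnion (univ : Finset (Fin n))
        (fun i => AA n (insert (i, σ i) Z) (s + 1))
      have e' := congrArg (Int.cast : ℤ → ℚ) e
      push_cast at e'
      rw [e', Polynomial.eval_comp, Polynomial.eval_finsetSum]
      apply sum_congr rfl
      rintro ⟨t, ht⟩ _
      have ht' := (mem_filter.1 ht).2
      rw [inf_AA σ (s + 1) t ht']
      have := hP t ht' (s + 1) (by omega)
      push_cast at this
      simp [this]
    obtain ⟨G, hG⟩ := h2
    obtain ⟨Q, hQ⟩ := poly_sum G
    refine ⟨Polynomial.C ((AA n Z 0).card : ℚ) + Q, fun r => ?_⟩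
    rw [Polynomial.eval_add, Polynomial.eval_C, hQ]
    induction r with
    | zero => simp
    | succ r ihr =>
      rw [sum_range_succ, ← add_assoc, ihr, hG, step σ hσ r]
      push_cast; rfl
  refine ⟨?_, main⟩
  by_cases h : ∃ σ : Equiv.Perm (Fin n), ∀ i, (i, σ i) ∉ Z
  · obtain ⟨P, hP⟩ := main h
    exact ⟨P, fun r _ => hP r⟩
  · refine ⟨0, fun r hr => ?_⟩
    have : AA n Z r = ∅ := by
      rw [eq_empty_iff_forall_notMem]
      exact fun M hM => h (exists_perm hr hM)
    simp [this]

/-- Free positions. -/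
def Fr (m : ℕ) : Finset (Fin (m + 3) × Fin (m + 3)) :=
  ((univ.erase 0).offDiag).erase (1, 2)

theorem mem_Fr {m : ℕ} {i j : Fin (m + 3)} :
    (i, j) ∈ Fr m ↔ i ≠ 0 ∧ j ≠ 0 ∧ i ≠ j ∧ ¬ (i = 1 ∧ j = 2) := by
  simp [Fr, mem_offDiag]; tauto

theorem fin_facts (m : ℕ) : (1 : Fin (m + 3)) ≠ 0 ∧ (2 : Fin (m + 3)) ≠ 0 ∧
    (1 : Fin (m + 3)) ≠ 2 := by
  refine ⟨?_, ?_, ?_⟩ <;> simp [Fin.ext_iff] <;> rw [Nat.mod_eq_of_lt (by omega)] <;> omega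

theorem card_Fr (m : ℕ) : (Fr m).card = (m + 3) ^ 2 - 3 * (m + 3) + 1 := by
  obtain ⟨h1, h2, h3⟩ := fin_facts m
  unfold Fr
  rw [card_erase_of_mem (by simp [mem_offDiag, h1, h2, h3]), offDiag_card,
    card_erase_of_mem (mem_univ _)]
  simp only [card_univ, Fintype.card_fin]
  have e1 : (m + 3 - 1) * (m + 3 - 1) = m * m + 4 * m + 4 := by
    rw [show m + 3 - 1 = m + 2 by omega]; ring
  have e2 : (m + 3) ^ 2 = m * m + 6 * m + 9 := by ring
  rw [e1, e2]; omega

theorem upper (m r : ℕ) : S (m + 3) r ≤ (r + 1) ^ (Fr m).card := by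
  rw [S_eq_card]
  have hc : (r + 1) ^ (Fr m).card =
      (Fintype.piFinset (fun _ : Fr m => range (r + 1))).card := by
    simp
  rw [hc]
  apply card_le_card_of_injOn (fun M p => M p.1.1 p.1.2)
  · intro M hM
    have hM' := (mem_filter.1 (mem_coe.1 hM)).1
    simp only [Fintype.mem_piFinset] at hM'
    simp only [mem_coe, Fintype.mem_piFinset]
    exact fun p => hM' _ _
  · intro M hM N hN h
    obtain ⟨h1, h2, h3⟩ := fin_facts m
    rw [mem_coe, mem_AA] at hM hN
    obtain ⟨hM0, hM1, hM2⟩ := hM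
    obtain ⟨hN0, hN1, hN2⟩ := hN
    obtain ⟨D, hD⟩ : ∃ D : Fin (m+3) → Fin (m+3) → ℤ, ∀ i j, D i j = (M i j : ℤ) - N i j :=
      ⟨_, fun _ _ => rfl⟩
    have hdiag : ∀ i, D i i = 0 := by
      intro i
      rw [hD, hM0 (i, i) (by simp), hN0 (i, i) (by simp)]; simp
    have hrow : ∀ i, ∑ j, D i j = 0 := by
      intro i
      simp only [hD, sum_sub_distrib]
      have a := hM1 i
      have b := hN1 i
      rw [← Nat.cast_sum, ← Nat.cast_sum, a, b, sub_self]
    have hcol : ∀ j, ∑ i, D i j = 0 := by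
      intro j
      simp only [hD, sum_sub_distrib]
      have a := hM2 j
      have b := hN2 j
      rw [← Nat.cast_sum, ← Nat.cast_sum, a, b, sub_self]
    have hfree : ∀ i j, i ≠ 0 → j ≠ 0 → ¬ (i = 1 ∧ j = 2) → D i j = 0 := by
      intro i j hi hj hij
      by_cases e : i = j
      · rw [e]; exact hdiag j
      · have := congrFun h ⟨(i, j), mem_Fr.2 ⟨hi, hj, e, hij⟩⟩
        simp only at this
        rw [hD, this, sub_self]
    have hi0 : ∀ i, i ≠ 1 → D i 0 = 0 := by
      intro i hi
      by_cases e : i = 0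
      · rw [e]; exact hdiag 0
      · rw [← hrow i]
        symm
        apply sum_eq_single 0
        · intro j _ hj; exact hfree i j e hj (fun h => hi h.1)
        · simp
    have h10 : D 1 0 = 0 := by
      rw [← hcol 0]
      symm
      apply sum_eq_single 1
      · intro i _ hi; exact hi0 i hi
      · simp
    have h12 : D 1 2 = 0 := by
      rw [← hrow 1]
      symm
      apply sum_eq_single 2
      · intro j _ hj
        by_cases e : j = 0
        · rw [e]; exact h10
        · exact hfree 1 j h1 e (fun h => hj h.2)
      · simp
    have hpos : ∀ i j, i ≠ 0 → D i j = 0 := by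
      intro i j hi
      by_cases e : j = 0
      · rw [e]
        by_cases e' : i = 1
        · rw [e']; exact h10
        · exact hi0 i e'
      · by_cases e' : i = 1 ∧ j = 2
        · rw [e'.1, e'.2]; exact h12
        · exact hfree i j hi e e'
    have hall : ∀ i j, D i j = 0 := by
      intro i j
      by_cases e : i = 0
      · rw [e, ← hcol j]
        symm
        apply sum_eq_single 0
        · intro i _ hi; exact hpos i j hi
        · simp
      · exact hpos i j e
    funext i j
    have := hall i j
    rw [hD] at this
    omega

/-- The zero-sum matrix with prescribed free entries. -/
def DD (m : ℕ) (x : Fin (m + 3) × Fin (m + 3) → ℕ) (i j : Fin (m + 3)) : ℤ :=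
  (x (i, j) : ℤ) - (if j = 0 then ∑ b, (x (i, b) : ℤ) else 0)
    - (if i = 0 then ∑ a, (x (a, j) : ℤ) else 0)
    + (∑ a, ∑ b, (x (a, b) : ℤ)) * ((if i = 1 then 1 else 0) * (if j = 0 then 1 else 0)
      + (if i = 0 then 1 else 0) * (if j = 2 then 1 else 0)
      - (if i = 1 then 1 else 0) * (if j = 2 then 1 else 0))

theorem DD_row (m : ℕ) (x : Fin (m + 3) × Fin (m + 3) → ℕ) (i : Fin (m + 3)) :
    ∑ j, DD m x i j = 0 := by
  unfold DD
  rw [sum_add_distrib, sum_sub_distrib, sum_sub_distrib, ← mul_sum, sum_sub_distrib,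
    sum_add_distrib, ← mul_sum, ← mul_sum, ← mul_sum]
  simp only [sum_ite_eq', mem_univ, if_true]
  by_cases h : i = 0
  · simp only [h, if_true]
    rw [sum_comm]
    ring
  · simp [h]

theorem DD_col (m : ℕ) (x : Fin (m + 3) × Fin (m + 3) → ℕ) (j : Fin (m + 3)) :
    ∑ i, DD m x i j = 0 := by
  unfold DD
  rw [sum_add_distrib, sum_sub_distrib, sum_sub_distrib, ← mul_sum, sum_sub_distrib,
    sum_add_distrib, ← sum_mul, ← sum_mul, ← sum_mul]
  simp only [sum_ite_eq', mem_univ, if_true]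
  by_cases h : j = 0
  · simp only [h, if_true]
    ring
  · simp [h]

theorem DD_lower (m : ℕ) (x : Fin (m + 3) × Fin (m + 3) → ℕ) (i j : Fin (m + 3))
    (hx0 : ∀ p, p ∉ Fr m → x p = 0) : -(∑ a, ∑ b, (x (a, b) : ℤ)) ≤ DD m x i j := by
  obtain ⟨h1, h2, h3⟩ := fin_facts m
  have hR : ∀ i, ∑ b, (x (i, b) : ℤ) ≤ ∑ a, ∑ b, (x (a, b) : ℤ) := fun i =>
    single_le_sum (f := fun a => ∑ b, (x (a, b) : ℤ)) (fun _ _ => by positivity) (mem_univ i)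
  have hC : ∀ j, ∑ a, (x (a, j) : ℤ) ≤ ∑ a, ∑ b, (x (a, b) : ℤ) := fun j => by
    rw [sum_comm (f := fun a b => (x (a, b) : ℤ))]
    exact single_le_sum (f := fun b => ∑ a, (x (a, b) : ℤ)) (fun _ _ => by positivity) (mem_univ j)
  have hR0 : ∑ b, (x (0, b) : ℤ) = 0 :=
    sum_eq_zero fun b _ => by rw [hx0 _ (by simp [mem_Fr])]; rfl
  have hC0 : ∑ a, (x (a, 0) : ℤ) = 0 :=
    sum_eq_zero fun b _ => by rw [hx0 _ (by simp [mem_Fr])]; rfl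
  have hT : 0 ≤ ∑ a, ∑ b, (x (a, b) : ℤ) := by positivity
  have hx : 0 ≤ (x (i, j) : ℤ) := by positivity
  have a := hR i
  have b := hC j
  unfold DD
  by_cases hi : i = 0
  · subst hi
    rw [hR0] at *
    by_cases hj : j = 0
    · subst hj
      simp [h1.symm, h2.symm, hC0]
      linarith
    · simp only [hj, if_true, if_false, h1.symm]
      split_ifs <;> linarith
  · by_cases hj : j = 0
    · subst hj
      simp only [hi, if_true, if_false, h2.symm]
      split_ifs <;> linarith
    · simp only [hi, hj, if_false]
      split_ifs <;> linarith

theorem DD_diag (m : ℕ) (x : Fin (m + 3) × Fin (m + 3) → ℕ) (i : Fin (m + 3))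
    (hx0 : ∀ p, p ∉ Fr m → x p = 0) : DD m x i i = 0 := by
  obtain ⟨h1, h2, h3⟩ := fin_facts m
  have hR0 : ∑ b, (x (0, b) : ℤ) = 0 :=
    sum_eq_zero fun b _ => by rw [hx0 _ (by simp [mem_Fr])]; rfl
  have hC0 : ∑ a, (x (a, 0) : ℤ) = 0 :=
    sum_eq_zero fun b _ => by rw [hx0 _ (by simp [mem_Fr])]; rfl
  have hx : x (i, i) = 0 := hx0 _ (by simp [mem_Fr])
  unfold DD
  by_cases hi : i = 0
  · subst hi
    simp [h1.symm, h2.symm, hC0, hR0, hx]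
  · by_cases hi1 : i = 1
    · subst hi1
      simp [h1, h3, hx]
    · simp [hi, hi1, hx]

theorem DD_free (m : ℕ) (x : Fin (m + 3) × Fin (m + 3) → ℕ) (i j : Fin (m + 3))
    (h : (i, j) ∈ Fr m) : DD m x i j = x (i, j) := by
  rw [mem_Fr] at h
  obtain ⟨hi, hj, hij, h12⟩ := h
  unfold DD
  by_cases h1 : i = 1
  · have : j ≠ 2 := fun h => h12 ⟨h1, h⟩
    simp [hi, hj, this]
  · simp [hi, hj, h1]

theorem lower (m k : ℕ) :
    (k + 1) ^ (Fr m).card ≤ S (m + 3) ((m + 2) * (Fr m).card * k) := by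
  rw [S_eq_card]
  set K : ℕ := (Fr m).card * k with hK
  have hc : (k + 1) ^ (Fr m).card = (Fintype.piFinset
      (fun p : Fin (m + 3) × Fin (m + 3) => if p ∈ Fr m then range (k + 1) else {0})).card := by
    rw [Fintype.card_piFinset]
    have : ∀ p : Fin (m + 3) × Fin (m + 3),
        (if p ∈ Fr m then range (k + 1) else {0}).card = if p ∈ Fr m then k + 1 else 1 := by
      intro p; split_ifs <;> simp
    simp only [this]
    rw [prod_ite_mem, univ_inter, prod_const]
  rw [hc]
  have hmem : ∀ x ∈ Fintype.piFinset
      (fun p : Fin (m + 3) × Fin (m + 3) => if p ∈ Fr m then range (k + 1) else {0}),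
      (∀ p, p ∉ Fr m → x p = 0) ∧ (∀ p, x p ≤ k) := by
    intro x hx
    rw [Fintype.mem_piFinset] at hx
    refine ⟨fun p hp => ?_, fun p => ?_⟩
    · have := hx p; simpa [hp] using this
    · have := hx p
      split_ifs at this
      · rw [mem_range] at this; omega
      · rw [mem_singleton] at this; omega
  have hcast : ∀ x ∈ Fintype.piFinset
      (fun p : Fin (m + 3) × Fin (m + 3) => if p ∈ Fr m then range (k + 1) else {0}),
      ∀ i j, (((((if i = j then 0 else (K : ℤ)) + DD m x i j).toNat : ℕ)) : ℤ) =
        (if i = j then 0 else (K : ℤ)) + DD m x i j := by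
    intro x hx i j
    obtain ⟨hx0, hxk⟩ := hmem x hx
    apply Int.toNat_of_nonneg
    by_cases hij : i = j
    · subst hij
      simp [DD_diag m x i hx0]
    · simp only [hij, if_false]
      have := DD_lower m x i j hx0
      have hT : ∑ a, ∑ b, (x (a, b) : ℤ) ≤ K := by
        rw [← Fintype.sum_prod_type' (f := fun a b => (x (a, b) : ℤ))]
        rw [← sum_subset (subset_univ (Fr m)) (fun p _ hp => by simp [hx0 p hp])]
        refine (sum_le_card_nsmul _ _ (k : ℤ) (fun p _ => by exact_mod_cast hxk p)).trans ?_
        simp [hK]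
      linarith
  apply card_le_card_of_injOn
    (fun x i j => ((if i = j then 0 else (K : ℤ)) + DD m x i j).toNat)
  · intro x hx
    have hx' := mem_coe.1 hx
    obtain ⟨hx0, hxk⟩ := hmem x hx'
    rw [mem_coe, mem_AA]
    refine ⟨?_, ?_, ?_⟩
    · rintro ⟨i, j⟩ hp
      have : i = j := by simpa using hp
      subst this
      simp [DD_diag m x i hx0]
    · intro i
      have : ((∑ j, ((if i = j then 0 else (K : ℤ)) + DD m x i j).toNat : ℕ) : ℤ)
          = ((m + 2) * (Fr m).card * k : ℕ) := by
        rw [Nat.cast_sum, sum_congr rfl (fun j _ => hcast x hx' i j), sum_add_distrib, DD_row,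
          ← add_sum_erase _ _ (mem_univ i),
          sum_congr rfl (fun j hj => if_neg (ne_of_mem_erase hj).symm)]
        simp [hK]; ring
      exact_mod_cast this
    · intro j
      have : ((∑ i, ((if i = j then 0 else (K : ℤ)) + DD m x i j).toNat : ℕ) : ℤ)
          = ((m + 2) * (Fr m).card * k : ℕ) := by
        rw [Nat.cast_sum, sum_congr rfl (fun i _ => hcast x hx' i j), sum_add_distrib, DD_col,
          ← add_sum_erase _ _ (mem_univ j),
          sum_congr rfl (fun i hi => if_neg (ne_of_mem_erase hi))]
        simp [hK]; ring
      exact_mod_cast this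
  · intro x hx y hy h
    have hx' := mem_coe.1 hx
    have hy' := mem_coe.1 hy
    funext p
    obtain ⟨i, j⟩ := p
    by_cases hp : (i, j) ∈ Fr m
    · have e := congrFun (congrFun h i) j
      simp only at e
      have e' := congrArg (Nat.cast : ℕ → ℤ) e
      rw [hcast x hx', hcast y hy', DD_free m x i j hp, DD_free m y i j hp] at e'
      have := add_left_cancel e'
      exact_mod_cast this
    · rw [(hmem x hx').1 _ hp, (hmem y hy').1 _ hp]

theorem degree_lemma (P : Polynomial ℚ) (d c : ℕ) (hc : 0 < c)
    (hu : ∀ r : ℕ, P.eval (r : ℚ) ≤ (r + 1) ^ d) (h0 : ∀ r : ℕ, 0 ≤ P.eval (r : ℚ))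
    (hl : ∀ k : ℕ, ((k : ℚ) + 1) ^ d ≤ P.eval ((c * k : ℕ) : ℚ)) : P.degree = (d : ℕ) := by
  have hQ : ((Polynomial.X + 1 : Polynomial ℚ) ^ d).degree = (d : ℕ) := by
    rw [Polynomial.degree_pow, ← Polynomial.C_1, Polynomial.degree_X_add_C]
    simp
  rcases lt_trichotomy P.degree (d : WithBot ℕ) with h | h | h
  · exfalso
    rw [← hQ] at h
    have ho := Polynomial.isLittleO_atTop_of_degree_lt _ _ h
    have ht : Filter.Tendsto (fun k : ℕ => ((c * k : ℕ) : ℚ)) Filter.atTop Filter.atTop :=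
      tendsto_natCast_atTop_atTop.comp (Filter.tendsto_id.const_mul_atTop' hc)
    have ho := ho.comp_tendsto ht
    have hb := ho.def (c := 1 / (2 * (c : ℝ) ^ d)) (by positivity)
    obtain ⟨k, hk⟩ := hb.exists
    simp only [Function.comp] at hk
    rw [← Rat.norm_cast_real, ← Rat.norm_cast_real, Real.norm_eq_abs, Real.norm_eq_abs,
      abs_of_nonneg (by exact_mod_cast h0 _), abs_of_nonneg (by
        simp only [Polynomial.eval_pow, Polynomial.eval_add, Polynomial.eval_X,
          Polynomial.eval_one]; positivity)] at hk
    have hlk : ((k : ℝ) + 1) ^ d ≤ ((P.eval ((c * k : ℕ) : ℚ) : ℚ) : ℝ) := by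
      exact_mod_cast hl k
    have e : (((((Polynomial.X + 1 : Polynomial ℚ) ^ d).eval ((c * k : ℕ) : ℚ) : ℚ)) : ℝ)
        ≤ (c : ℝ) ^ d * ((k : ℝ) + 1) ^ d := by
      simp only [Polynomial.eval_pow, Polynomial.eval_add, Polynomial.eval_X,
          Polynomial.eval_one]
      push_cast
      rw [← mul_pow]
      have : (1 : ℝ) ≤ c := by exact_mod_cast hc
      gcongr
      linarith
    have hp : (0 : ℝ) < (c : ℝ) ^ d := by positivity
    have hkp : (0 : ℝ) < ((k : ℝ) + 1) ^ d := by positivity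
    have h3 := hlk.trans (hk.trans (mul_le_mul_of_nonneg_left e (by positivity)))
    have h4 : 1 / (2 * (c : ℝ) ^ d) * ((c : ℝ) ^ d * ((k : ℝ) + 1) ^ d)
        = ((k : ℝ) + 1) ^ d / 2 := by field_simp
    rw [h4] at h3
    linarith
  · exact h
  · exfalso
    rw [← hQ] at h
    have ho := (Polynomial.isLittleO_atTop_of_degree_lt _ _ h).comp_tendsto
      (tendsto_natCast_atTop_atTop (R := ℚ))
    have hb := ho.def (c := 1 / 2) (by positivity)
    obtain ⟨k, hk⟩ := hb.exists
    simp only [Function.comp] at hk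
    rw [← Rat.norm_cast_real, ← Rat.norm_cast_real, Real.norm_eq_abs, Real.norm_eq_abs,
      abs_of_nonneg (a := ((P.eval (k : ℚ) : ℚ) : ℝ)) (by exact_mod_cast h0 _),
      abs_of_nonneg (by
        simp only [Polynomial.eval_pow, Polynomial.eval_add, Polynomial.eval_X,
          Polynomial.eval_one]; positivity)] at hk
    simp only [Polynomial.eval_pow, Polynomial.eval_add, Polynomial.eval_X,
          Polynomial.eval_one] at hk
    push_cast at hk
    have huk : ((P.eval (k : ℚ) : ℚ) : ℝ) ≤ ((k : ℝ) + 1) ^ d := by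
      exact_mod_cast hu k
    have hkp : (0 : ℝ) < ((k : ℝ) + 1) ^ d := by positivity
    linarith

theorem S_is_polynomial (n : ℕ) (hn : 3 ≤ n) :
    ∃ P : Polynomial ℚ, P.degree = (n ^ 2 - 3 * n + 1 : ℕ) ∧
      ∀ r : ℕ, P.eval (r : ℚ) = S n r := by
  obtain ⟨m, rfl⟩ : ∃ m, n = m + 3 := ⟨n - 3, by omega⟩
  obtain ⟨P, hP⟩ := (poly_main (n := m + 3) (univ.filter fun p => p.1 = p.2)).2
    ⟨finRotate (m + 3), fun i => by
      simp only [mem_filter, mem_univ, true_and, finRotate_apply]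
      intro h
      exact (fin_facts m).1 (left_eq_add.1 h)⟩
  have hP' : ∀ r : ℕ, P.eval (r : ℚ) = S (m + 3) r := fun r => by rw [hP, S_eq_card]
  refine ⟨P, ?_, hP'⟩
  rw [← card_Fr]
  have hpos : 0 < (Fr m).card := by rw [card_Fr]; omega
  apply degree_lemma P _ ((m + 2) * (Fr m).card) (by positivity)
  · intro r
    rw [hP']
    exact_mod_cast upper m r
  · intro r; rw [hP']; positivity
  · intro k
    rw [hP']
    exact_mod_cast lower m k
end

section
/- For every fixed integer n ≥ 3, if P is a polynomial with rational coefficients such that P(r) = S_n(r) for every natural number r, then P satisfies the reciprocity relation P(−(n−1) − x) = −P(x) for all x; equivalently, the polynomial identity P(−(n−1) − X) = −P(X) holds. -/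
section EulerPart

open Classical

set_option linter.unusedSectionVars false

variable {V ι : Type*} [AddCommGroup V] [Module ℚ V] [Fintype ι] [DecidableEq ι]

/-- sign vector of `x` with respect to the functionals in `I` -/
noncomputable def sgv (f : ι → V →ₗ[ℚ] ℚ) (I : Finset ι) (x : V) : ι → SignType :=
  fun i => if i ∈ I then SignType.sign (f i x) else 0

/-- linear span of a cell -/
def Wsp (f : ι → V →ₗ[ℚ] ℚ) (I : Finset ι) (s : ι → SignType) : Submodule ℚ V where
  carrier := {x | ∀ i ∈ I, s i = 0 → f i x = 0}
  zero_mem' := by intro i _ _; simp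
  add_mem' := by
    intro a b ha hb i hi hs
    simp [ha i hi hs, hb i hi hs]
  smul_mem' := by
    intro c a ha i hi hs
    simp [ha i hi hs]

/-- Euler characteristic of a set, computed by the cells of `I` -/
noncomputable def eul (f : ι → V →ₗ[ℚ] ℚ) (I : Finset ι) (A : Set V) : ℚ :=
  ∑ s : ι → SignType, if ∃ x ∈ A, sgv f I x = s then (-1) ^ Module.finrank ℚ (Wsp f I s) else 0

lemma mem_Wsp {f : ι → V →ₗ[ℚ] ℚ} {I : Finset ι} {s : ι → SignType} {x : V} :
    x ∈ Wsp f I s ↔ ∀ i ∈ I, s i = 0 → f i x = 0 := Iff.rfl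

lemma sgv_insert (f : ι → V →ₗ[ℚ] ℚ) (I : Finset ι) (g : ι) (x : V) :
    sgv f (insert g I) x = Function.update (sgv f I x) g (SignType.sign (f g x)) := by
  ext i
  by_cases h : i = g
  · subst h; simp [sgv]
  · simp [sgv, h]

lemma Wsp_update_ne (f : ι → V →ₗ[ℚ] ℚ) {I : Finset ι} {g : ι} (hg : g ∉ I) (s : ι → SignType)
    {τ : SignType} (hτ : τ ≠ 0) :
    Wsp f (insert g I) (Function.update s g τ) = Wsp f I s := by
  ext x
  simp only [mem_Wsp, Finset.mem_insert, forall_eq_or_imp, Function.update_self]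
  constructor
  · rintro ⟨_, h⟩ i hi hs
    have : i ≠ g := by rintro rfl; exact hg hi
    exact h i hi (by simpa [this] using hs)
  · intro h
    refine ⟨fun h => absurd h hτ, fun i hi hs => ?_⟩
    have : i ≠ g := by rintro rfl; exact hg hi
    exact h i hi (by simpa [this] using hs)

lemma Wsp_update_zero (f : ι → V →ₗ[ℚ] ℚ) {I : Finset ι} {g : ι} (hg : g ∉ I) (s : ι → SignType) :
    Wsp f (insert g I) (Function.update s g 0) = Wsp f I s ⊓ LinearMap.ker (f g) := by
  ext x
  simp only [mem_Wsp, Finset.mem_insert, forall_eq_or_imp, Function.update_self, Submodule.mem_inf,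
    LinearMap.mem_ker]
  constructor
  · rintro ⟨h0, h⟩
    refine ⟨fun i hi hs => ?_, h0 trivial⟩
    have : i ≠ g := by rintro rfl; exact hg hi
    exact h i hi (by simpa [this] using hs)
  · rintro ⟨h, h0⟩
    refine ⟨fun _ => h0, fun i hi hs => ?_⟩
    have : i ≠ g := by rintro rfl; exact hg hi
    exact h i hi (by simpa [this] using hs)

lemma eul_insert (f : ι → V →ₗ[ℚ] ℚ) {I : Finset ι} {g : ι} (hg : g ∉ I) (A : Set V) :
    eul f (insert g I) A = ∑ s : ι → SignType,
      ((if ∃ x ∈ A, sgv f I x = s ∧ f g x = 0 then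
          (-1 : ℚ) ^ Module.finrank ℚ (Wsp f I s ⊓ LinearMap.ker (f g) : Submodule ℚ V) else 0) +
       (if ∃ x ∈ A, sgv f I x = s ∧ f g x < 0 then (-1) ^ Module.finrank ℚ (Wsp f I s) else 0) +
       (if ∃ x ∈ A, sgv f I x = s ∧ 0 < f g x then (-1) ^ Module.finrank ℚ (Wsp f I s) else 0)) := by
  unfold eul
  rw [← Finset.sum_fiberwise (s := Finset.univ) (g := fun s' : ι → SignType => Function.update s' g 0)]
  refine Finset.sum_congr rfl fun s _ => ?_
  have hsg : ∀ x, sgv f I x g = 0 := fun x => by simp [sgv, hg]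
  by_cases hs : s g = 0
  · have himg : (Finset.univ.filter fun s' : ι → SignType => Function.update s' g 0 = s)
        = Finset.univ.image (fun τ => Function.update s g τ) := by
      ext s'
      simp only [Finset.mem_filter, Finset.mem_univ, true_and, Finset.mem_image]
      constructor
      · rintro rfl
        exact ⟨s' g, by simp⟩
      · rintro ⟨τ, rfl⟩
        simp [← hs]
    have key : ∀ τ, (∃ x ∈ A, sgv f (insert g I) x = Function.update s g τ) ↔
        ∃ x ∈ A, sgv f I x = s ∧ SignType.sign (f g x) = τ := by
      intro τ
      refine exists_congr fun x => and_congr_right fun _ => ?_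
      rw [sgv_insert]
      constructor
      · intro h
        refine ⟨?_, by simpa using congrFun h g⟩
        ext i
        by_cases hi : i = g
        · subst hi; rw [hsg, hs]
        · simpa [hi] using congrFun h i
      · rintro ⟨rfl, rfl⟩; rfl
    rw [himg, Finset.sum_image (fun a _ b _ h => by simpa using congrFun h g), SignType.univ_eq]
    rw [Finset.sum_insert (by decide), Finset.sum_insert (by decide), Finset.sum_singleton]
    simp only [key]
    rw [Wsp_update_zero f hg, Wsp_update_ne f hg s (by decide), Wsp_update_ne f hg s (by decide)]
    simp only [sign_eq_zero_iff, sign_eq_neg_one_iff, sign_eq_one_iff]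
    ring
  · have h1 : ∀ x, sgv f I x ≠ s := by
      rintro x rfl; exact hs (hsg x)
    simp only [h1, false_and, and_false, exists_false, if_false, add_zero]
    apply Finset.sum_eq_zero
    intro s' hs'
    simp only [Finset.mem_filter, Finset.mem_univ, true_and] at hs'
    exact absurd (by rw [← hs']; simp) hs

lemma finrank_inf_ker [FiniteDimensional ℚ V] (W : Submodule ℚ V) (g : V →ₗ[ℚ] ℚ) (w : V) (hw : w ∈ W)
    (hgw : g w ≠ 0) :
    Module.finrank ℚ (W ⊓ LinearMap.ker g : Submodule ℚ V) + 1 = Module.finrank ℚ W := by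
  have h := LinearMap.finrank_range_add_finrank_ker (g.domRestrict W)
  have hr : LinearMap.range (g.domRestrict W) = ⊤ := by
    apply LinearMap.range_eq_top.2
    intro c
    refine ⟨(c / g w) • ⟨w, hw⟩, ?_⟩
    simp [hgw]
  rw [hr, finrank_top, Module.finrank_self] at h
  have hk : Module.finrank ℚ (LinearMap.ker (g.domRestrict W)) =
      Module.finrank ℚ (W ⊓ LinearMap.ker g : Submodule ℚ V) := by
    rw [LinearMap.ker_domRestrict]
    have : W ⊓ LinearMap.ker g = ((LinearMap.ker g).submoduleOf W).map W.subtype := by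
      rw [Submodule.submoduleOf, Submodule.map_comap_subtype]
    rw [this]
    exact (Submodule.finrank_map_subtype_eq _ _).symm
  omega


/-- `A` is a union of cells -/
def Sat (f : ι → V →ₗ[ℚ] ℚ) (I : Finset ι) (A : Set V) : Prop :=
  ∀ x ∈ A, ∀ y, sgv f I x = sgv f I y → y ∈ A

lemma sgv_eq_iff (f : ι → V →ₗ[ℚ] ℚ) (I : Finset ι) (x y : V) :
    sgv f I x = sgv f I y ↔ ∀ i ∈ I, SignType.sign (f i x) = SignType.sign (f i y) := by
  constructor
  · intro h i hi
    simpa [sgv, hi] using congrFun h i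
  · intro h
    ext i
    by_cases hi : i ∈ I
    · simp [sgv, hi, h i hi]
    · simp [sgv, hi]

lemma Sat.mono {f : ι → V →ₗ[ℚ] ℚ} {I J : Finset ι} {A : Set V} (h : Sat f I A) (hIJ : I ⊆ J) :
    Sat f J A := fun x hx y hxy => h x hx y <| by
  rw [sgv_eq_iff] at hxy ⊢
  exact fun i hi => hxy i (hIJ hi)

/-- small perturbation inside a cell -/
lemma exists_perturb (f : ι → V →ₗ[ℚ] ℚ) (I : Finset ι) (x w : V)
    (hw : w ∈ Wsp f I (sgv f I x)) :
    ∃ ε : ℚ, 0 < ε ∧ ∀ c : ℚ, |c| ≤ ε → sgv f I (x + c • w) = sgv f I x := by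
  have key : ∀ i : ι, ∃ ε : ℚ, 0 < ε ∧ (i ∈ I → ∀ c : ℚ, |c| ≤ ε →
      SignType.sign (f i (x + c • w)) = SignType.sign (f i x)) := by
    intro i
    by_cases hi : i ∈ I
    swap
    · exact ⟨1, one_pos, fun h => absurd h hi⟩
    by_cases h0 : f i x = 0
    · refine ⟨1, one_pos, fun _ c _ => ?_⟩
      have : f i w = 0 := hw i hi (by simp [sgv, h0])
      simp [this, h0]
    · have hpos : 0 < |f i x| := abs_pos.2 h0
      refine ⟨|f i x| / (2 * (|f i w| + 1)), by positivity, fun _ c hc => ?_⟩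
      have hb : |c * f i w| < |f i x| := by
        rw [abs_mul]
        have h1 : |c| * |f i w| ≤ |f i x| / (2 * (|f i w| + 1)) * (|f i w| + 1) := by
          gcongr
          linarith
        have h2 : |f i x| / (2 * (|f i w| + 1)) * (|f i w| + 1) = |f i x| / 2 := by
          have : |f i w| + 1 ≠ 0 := by positivity
          field_simp
        linarith
      simp only [map_add, map_smul, smul_eq_mul]
      rcases lt_or_gt_of_ne h0 with h | h
      · rw [abs_of_neg h] at hb
        have := (abs_lt.1 hb).2
        rw [sign_neg h, sign_neg (by linarith)]
      · rw [abs_of_pos h] at hb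
        have := (abs_lt.1 hb).1
        rw [sign_pos h, sign_pos (by linarith)]
  choose ε hε h using key
  by_cases hne : (Finset.univ : Finset ι).Nonempty
  · refine ⟨Finset.univ.inf' hne ε, by simpa [Finset.lt_inf'_iff] using hε, fun c hc => ?_⟩
    rw [sgv_eq_iff]
    exact fun i hi => h i hi c (hc.trans (Finset.inf'_le _ (Finset.mem_univ i)))
  · refine ⟨1, one_pos, fun c _ => ?_⟩
    ext i
    exact absurd ⟨i, Finset.mem_univ i⟩ hne

lemma sgv_convex (f : ι → V →ₗ[ℚ] ℚ) (I : Finset ι) (x y : V) (h : sgv f I x = sgv f I y)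
    (a b : ℚ) (ha : 0 < a) (hb : 0 < b) : sgv f I (a • x + b • y) = sgv f I x := by
  rw [sgv_eq_iff] at h ⊢
  intro i hi
  have h := h i hi
  simp only [map_add, map_smul, smul_eq_mul]
  rcases lt_trichotomy (f i x) 0 with hx | hx | hx
  · rw [sign_neg hx, eq_comm, sign_eq_neg_one_iff] at h
    rw [sign_neg hx, sign_eq_neg_one_iff]
    nlinarith
  · rw [hx, sign_zero, eq_comm, sign_eq_zero_iff] at h
    simp [hx, h]
  · rw [sign_pos hx, eq_comm, sign_eq_one_iff] at h
    rw [sign_pos hx, sign_eq_one_iff]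
    nlinarith [mul_pos ha hx, mul_pos hb h]

lemma eul_step [FiniteDimensional ℚ V] (f : ι → V →ₗ[ℚ] ℚ) {I : Finset ι} {g : ι} (hg : g ∉ I)
    {A : Set V} (hA : Sat f I A) : eul f (insert g I) A = eul f I A := by
  rw [eul_insert f hg]
  unfold eul
  refine Finset.sum_congr rfl fun s _ => ?_
  by_cases hs : ∃ x ∈ A, sgv f I x = s
  swap
  · have h1 : ∀ (Q : V → Prop), ¬ ∃ x ∈ A, sgv f I x = s ∧ Q x := by
      rintro Q ⟨x, hx, h, _⟩
      exact hs ⟨x, hx, h⟩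
    rw [if_neg (h1 _), if_neg (h1 _), if_neg (h1 _), if_neg hs]; simp
  rw [if_pos hs]
  obtain ⟨x, hxA, hxs⟩ := hs
  have hmem : ∀ y, sgv f I y = s → y ∈ A := fun y hy => hA x hxA y (by rw [hxs, hy])
  by_cases hW : ∀ w ∈ Wsp f I s, f g w = 0
  · have hall : ∀ y, sgv f I y = s → f g y = 0 := by
      rintro y rfl
      apply hW
      intro i hi h
      simpa [sgv, hi] using h
    rw [if_pos ⟨x, hxA, hxs, hall x hxs⟩, if_neg, if_neg]
    · have : Wsp f I s ⊓ LinearMap.ker (f g) = Wsp f I s := by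
        apply inf_eq_left.2
        intro w hw
        exact hW w hw
      rw [this]; simp
    · rintro ⟨y, _, hy, h⟩
      exact h.ne' (hall y hy)
    · rintro ⟨y, _, hy, h⟩
      exact h.ne (hall y hy)
  · push Not at hW
    obtain ⟨w, hw, hgw⟩ := hW
    by_cases hz : ∃ y, sgv f I y = s ∧ f g y = 0
    · obtain ⟨y, hy, hy0⟩ := hz
      obtain ⟨ε, hε, hp⟩ := exists_perturb f I y w (by rw [hy]; exact hw)
      have h1 := hp ε (by rw [abs_of_pos hε])
      have h2 := hp (-ε) (by rw [abs_neg, abs_of_pos hε])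
      rw [hy] at h1 h2
      have e1 : f g (y + ε • w) = ε * f g w := by simp [hy0]
      have e2 : f g (y + (-ε) • w) = -(ε * f g w) := by simp [hy0]
      have hr := finrank_inf_ker (Wsp f I s) (f g) w hw hgw
      rw [if_pos ⟨y, hmem y hy, hy, hy0⟩, if_pos, if_pos, ← hr]
      · rw [pow_succ]; ring
      · rcases lt_or_gt_of_ne hgw with h | h
        · exact ⟨_, hmem _ h2, h2, by rw [e2]; nlinarith⟩
        · exact ⟨_, hmem _ h1, h1, by rw [e1]; positivity⟩
      · rcases lt_or_gt_of_ne hgw with h | h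
        · exact ⟨_, hmem _ h1, h1, by rw [e1]; nlinarith⟩
        · exact ⟨_, hmem _ h2, h2, by rw [e2]; nlinarith [mul_pos hε h]⟩
    · push Not at hz
      have hno : ∀ y z, sgv f I y = s → sgv f I z = s → f g y < 0 → 0 < f g z → False := by
        intro y z hy hz' hyn hzp
        refine hz (f g z • y + (-f g y) • z) ?_ ?_
        · rw [sgv_convex f I y z (by rw [hy, hz']) _ _ hzp (by linarith), hy]
        · simp; ring
      rw [if_neg]
      · rcases lt_or_gt_of_ne (hz x hxs) with h | h
        · rw [if_pos ⟨x, hxA, hxs, h⟩, if_neg]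
          · simp
          · rintro ⟨z, _, hz', hzp⟩
            exact hno x z hxs hz' h hzp
        · rw [if_neg, if_pos ⟨x, hxA, hxs, h⟩]
          · simp
          · rintro ⟨z, _, hz', hzp⟩
            exact hno z x hz' hxs hzp h
      · rintro ⟨y, _, hy, hy0⟩
        exact hz y hy hy0

lemma eul_mono [FiniteDimensional ℚ V] (f : ι → V →ₗ[ℚ] ℚ) {I J : Finset ι} (hIJ : I ⊆ J)
    {A : Set V} (hA : Sat f I A) : eul f J A = eul f I A := by
  obtain ⟨K, rfl⟩ : ∃ K, J = I ∪ K := ⟨J, (Finset.union_eq_right.2 hIJ).symm⟩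
  clear hIJ
  induction K using Finset.induction_on with
  | empty => simp
  | insert a K ha ih =>
    rw [Finset.union_insert]
    by_cases h : a ∈ I ∪ K
    · rw [Finset.insert_eq_of_mem h, ih]
    · rw [eul_step f h (hA.mono Finset.subset_union_left), ih]

lemma eul_split (f : ι → V →ₗ[ℚ] ℚ) {H J : Finset ι} (hHJ : H ⊆ J) (A : Set V) :
    eul f J A = ∑ s : ι → SignType, eul f J {x | x ∈ A ∧ sgv f H x = s} := by
  unfold eul
  rw [Finset.sum_comm]
  refine Finset.sum_congr rfl fun s' _ => ?_
  by_cases h : ∃ x ∈ A, sgv f J x = s'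
  · rw [if_pos h]
    obtain ⟨x, hx, rfl⟩ := h
    rw [Finset.sum_eq_single (sgv f H x)]
    · rw [if_pos ⟨x, ⟨hx, rfl⟩, rfl⟩]
    · intro s _ hs
      rw [if_neg]
      rintro ⟨y, ⟨_, rfl⟩, hy⟩
      apply hs
      rw [sgv_eq_iff] at hy ⊢
      exact fun i hi => hy i (hHJ hi)
    · simp
  · rw [if_neg h]
    symm
    apply Finset.sum_eq_zero
    intro s _
    rw [if_neg]
    rintro ⟨y, ⟨hy, _⟩, hy'⟩
    exact h ⟨y, hy, hy'⟩

end EulerPart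

section EulerMain

open Classical

variable {V E : Type*} [AddCommGroup V] [Module ℚ V] [FiniteDimensional ℚ V] [Fintype E] [DecidableEq E]

/-- auxiliary functionals for the refined arrangement -/
def refFun (f : E → V →ₗ[ℚ] ℚ) (v : V) : (E × E) ⊕ E → V →ₗ[ℚ] ℚ
  | Sum.inl (a, b) => f a v • f b - f b v • f a
  | Sum.inr e => f e

lemma eul_cone_zero [Nonempty E] (f : E → V →ₗ[ℚ] ℚ) (v : V) (hv : ∀ e, 0 < f e v) :
    eul (refFun f v) (Finset.univ.image Sum.inr) {x | ∀ e, 0 ≤ f e x} = 0 := by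
  set k := refFun f v with hk
  set C : Set V := {x | ∀ e, 0 ≤ f e x} with hC
  set H : Finset ((E × E) ⊕ E) := Finset.univ.image Sum.inl with hH
  have hsat : Sat k (Finset.univ.image Sum.inr) C := by
    intro x hx y hxy e
    rw [sgv_eq_iff] at hxy
    have := hxy (Sum.inr e) (by simp)
    simp only [hk, refFun] at this
    have hxe : 0 ≤ f e x := hx e
    rwa [← sign_nonneg_iff, ← this, sign_nonneg_iff]
  rw [← eul_mono k (Finset.subset_univ _) hsat, eul_split k (Finset.subset_univ H)]
  apply Finset.sum_eq_zero
  intro s _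
  by_cases hD : ∃ x, sgv k H x = s
  swap
  · unfold eul
    apply Finset.sum_eq_zero
    intro s' _
    rw [if_neg]
    rintro ⟨x, ⟨_, hx⟩, _⟩
    exact hD ⟨x, hx⟩
  obtain ⟨x0, hx0⟩ := hD
  obtain ⟨e, _, he⟩ := Finset.exists_min_image Finset.univ (fun e => f e x0 / f e v)
    Finset.univ_nonempty
  have hmin : ∀ b, 0 ≤ f e v * f b x0 - f b v * f e x0 := by
    intro b
    have := he b (Finset.mem_univ b)
    rw [div_le_div_iff₀ (hv e) (hv b)] at this
    linarith
  have hmin' : ∀ x, sgv k H x = s → ∀ b, 0 ≤ f e v * f b x - f b v * f e x := by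
    intro x hx b
    rw [← hx0, sgv_eq_iff] at hx
    have := hx (Sum.inl (e, b)) (by simp [hH])
    simp only [hk, refFun, LinearMap.sub_apply, LinearMap.smul_apply, smul_eq_mul] at this
    rw [← sign_nonneg_iff, this, sign_nonneg_iff]
    exact hmin b
  have hset : {x | x ∈ C ∧ sgv k H x = s} = {x | 0 ≤ f e x ∧ sgv k H x = s} := by
    ext x
    simp only [Set.mem_ofPred_eq]
    refine and_congr_left fun hx => ⟨fun h => h e, fun h b => ?_⟩
    have h1 := hmin' x hx b
    have h2 : 0 ≤ f e v * f b x := by nlinarith [mul_nonneg (hv b).le h]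
    exact nonneg_of_mul_nonneg_right h2 (hv e)
  have hgH : (Sum.inr e : (E × E) ⊕ E) ∉ H := by simp [hH]
  have hsat2 : Sat k (insert (Sum.inr e) H) {x | 0 ≤ f e x ∧ sgv k H x = s} := by
    rintro x ⟨hx, hxs⟩ y hxy
    rw [sgv_eq_iff] at hxy
    constructor
    · have := hxy (Sum.inr e) (by simp)
      simp only [hk, refFun] at this
      rwa [← sign_nonneg_iff, ← this, sign_nonneg_iff]
    · rw [← hxs, sgv_eq_iff]
      exact fun i hi => (hxy i (Finset.mem_insert_of_mem hi)).symm
  rw [hset, eul_mono k (Finset.subset_univ _) hsat2, eul_insert k hgH]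
  have hvW : ∀ s', v ∈ Wsp k H s' := by
    intro s' i hi _
    simp only [hH, Finset.mem_image, Finset.mem_univ, true_and] at hi
    obtain ⟨⟨a, b⟩, rfl⟩ := hi
    simp [hk, refFun]; ring
  have hshift : ∀ c : ℚ, sgv k H (x0 + c • v) = s := by
    intro c
    rw [← hx0, sgv_eq_iff]
    intro i hi
    have : k i v = 0 := by
      have := hvW 0 i hi rfl
      exact this
    simp [this]
  have hke : k (Sum.inr e) = f e := rfl
  apply Finset.sum_eq_zero
  intro s' _
  by_cases hs : s' = s
  swap
  · have h1 : ∀ (Q : V → Prop), ¬ ∃ x ∈ {x | 0 ≤ f e x ∧ sgv k H x = s}, sgv k H x = s' ∧ Q x := by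
      rintro Q ⟨x, ⟨_, hx⟩, h, _⟩
      exact hs (by rw [← h, hx])
    rw [if_neg (h1 _), if_neg (h1 _), if_neg (h1 _)]; simp
  subst hs
  have hne := (hv e).ne'
  rw [if_pos, if_neg, if_pos, hke, ← finrank_inf_ker (Wsp k H s') (f e) v (hvW _) hne]
  · rw [pow_succ]; ring
  · have hval : f e (x0 + (-(f e x0) / f e v + 1) • v) = f e v := by
      simp; field_simp; ring
    refine ⟨x0 + (-(f e x0) / f e v + 1) • v, ⟨?_, hshift _⟩, hshift _, ?_⟩
    · rw [hval]; exact (hv e).le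
    · rw [hke, hval]; exact hv e
  · rintro ⟨x, ⟨hx, _⟩, _, hx'⟩
    rw [hke] at hx'
    linarith
  · have hval : f e (x0 + (-(f e x0) / f e v) • v) = 0 := by
      simp; field_simp; ring
    refine ⟨x0 + (-(f e x0) / f e v) • v, ⟨?_, hshift _⟩, hshift _, ?_⟩
    · rw [hval]
    · rw [hke, hval]

/-- the common kernel of the functionals outside `T` -/
def Ksp (f : E → V →ₗ[ℚ] ℚ) (T : Finset E) : Submodule ℚ V where
  carrier := {x | ∀ e, e ∉ T → f e x = 0}
  zero_mem' := by intro i _; simp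
  add_mem' := by
    intro a b ha hb i hi
    simp [ha i hi, hb i hi]
  smul_mem' := by
    intro c a ha i hi
    simp [ha i hi]

/-- Euler relation for a polyhedral cone -/
theorem euler_relation [Nonempty E] (f : E → V →ₗ[ℚ] ℚ) (v : V) (hv : ∀ e, 0 < f e v) :
    ∑ T : Finset E, (if ∃ x, (∀ e, e ∈ T → 0 < f e x) ∧ (∀ e, e ∉ T → f e x = 0) then
      (-1 : ℚ) ^ Module.finrank ℚ (Ksp f T) else 0) = 0 := by
  refine Eq.trans ?_ (eul_cone_zero f v hv)
  unfold eul
  refine Finset.sum_of_injOn (fun T => Sum.elim (fun _ => 0) (fun e => if e ∈ T then 1 else 0))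
    ?_ (by simp) ?_ ?_
  · intro T _ T' _ h
    ext e
    have := congrFun h (Sum.inr e)
    simp only [Sum.elim_inr] at this
    by_cases h1 : e ∈ T <;> by_cases h2 : e ∈ T' <;> simp_all
  · intro s _ hs
    rw [if_neg]
    rintro ⟨x, hx, rfl⟩
    apply hs
    refine ⟨Finset.univ.filter fun e => 0 < f e x, by simp, ?_⟩
    ext i
    rcases i with i | e
    · simp [sgv]
    · simp only [sgv, Sum.elim_inr, Finset.mem_filter, Finset.mem_univ, true_and,
        Finset.mem_image, Sum.inr.injEq, exists_eq, if_true, refFun]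
      by_cases h : 0 < f e x
      · rw [if_pos h, sign_pos h]
      · have : f e x = 0 := le_antisymm (not_lt.1 h) (hx e)
        simp [this]
  · intro T _
    have hW : Wsp (refFun f v) (Finset.univ.image Sum.inr)
        (Sum.elim (fun _ => 0) (fun e => if e ∈ T then 1 else 0)) = Ksp f T := by
      ext x
      rw [mem_Wsp]
      constructor
      · intro h e he
        exact h (Sum.inr e) (by simp) (by simp [he])
      · intro h i hi hs
        simp only [Finset.mem_image, Finset.mem_univ, true_and] at hi
        obtain ⟨e, rfl⟩ := hi
        apply h e
        intro he
        simp [he] at hs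
    rw [hW]
    refine if_congr ?_ rfl rfl
    refine exists_congr fun x => ?_
    constructor
    · rintro ⟨h1, h2⟩
      refine ⟨fun e => ?_, ?_⟩
      · by_cases he : e ∈ T
        · exact (h1 e he).le
        · exact (h2 e he).ge
      · ext i
        rcases i with i | e
        · simp [sgv]
        · by_cases he : e ∈ T
          · simp [sgv, refFun, he, sign_pos (h1 e he)]
          · simp [sgv, refFun, he, h2 e he]
    · rintro ⟨hx, h⟩
      have h' : ∀ e, SignType.sign (f e x) = if e ∈ T then 1 else 0 := by
        intro e
        simpa [sgv, refFun] using congrFun h (Sum.inr e)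
      refine ⟨fun e he => ?_, fun e he => ?_⟩
      · have := h' e
        rwa [if_pos he, sign_eq_one_iff] at this
      · have := h' e
        rwa [if_neg he, sign_eq_zero_iff] at this

end EulerMain


section SeriesPart

open Polynomial

/-- the series `1/(1-t)` -/
noncomputable def useries : PowerSeries ℚ := PowerSeries.mk 1

/-- `G` and `H` correspond to each other under `t ↦ 1/t` -/
def RecRel (G H : PowerSeries ℚ) : Prop :=
  ∃ p : ℚ[X], aeval useries p = G ∧ aeval (1 - useries) p = H

lemma RecRel.symm {G H : PowerSeries ℚ} (h : RecRel G H) : RecRel H G := by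
  obtain ⟨p, rfl, rfl⟩ := h
  refine ⟨p.comp (1 - X), ?_, ?_⟩
  · rw [aeval_comp]; simp
  · rw [aeval_comp]; simp

lemma RecRel.one : RecRel 1 1 := ⟨1, by simp, by simp⟩

lemma RecRel.zero : RecRel 0 0 := ⟨0, by simp, by simp⟩

lemma RecRel.add {G H G' H' : PowerSeries ℚ} (h : RecRel G H) (h' : RecRel G' H') :
    RecRel (G + G') (H + H') := by
  obtain ⟨p, rfl, rfl⟩ := h
  obtain ⟨q, rfl, rfl⟩ := h'
  exact ⟨p + q, by simp, by simp⟩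

lemma RecRel.smul {G H : PowerSeries ℚ} (h : RecRel G H) (c : ℚ) : RecRel (c • G) (c • H) := by
  obtain ⟨p, rfl, rfl⟩ := h
  exact ⟨c • p, by simp, by simp⟩

lemma RecRel.mul_u {G H : PowerSeries ℚ} (h : RecRel G H) : RecRel (useries * G) ((1 - useries) * H) := by
  obtain ⟨p, rfl, rfl⟩ := h
  exact ⟨X * p, by simp, by simp⟩

lemma RecRel.sum {ι : Type*} (s : Finset ι) (G H : ι → PowerSeries ℚ) (h : ∀ i ∈ s, RecRel (G i) (H i)) :
    RecRel (∑ i ∈ s, G i) (∑ i ∈ s, H i) := by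
  classical
  induction s using Finset.induction_on with
  | empty => simpa using RecRel.zero
  | insert a s ha ih =>
    rw [Finset.sum_insert ha, Finset.sum_insert ha]
    exact (h a (by simp)).add (ih fun i hi => h i (by simp [hi]))

lemma u_mul : useries * (1 - PowerSeries.X) = 1 := PowerSeries.mk_one_mul_one_sub_eq_one ℚ

lemma one_sub_u : 1 - useries = - (PowerSeries.X * useries) := by
  have := u_mul
  linear_combination -this

lemma coeff_u_pow (m r : ℕ) : PowerSeries.coeff r (useries ^ (m + 1)) = ((m + r).choose m : ℚ) := by
  unfold useries
  rw [PowerSeries.mk_one_pow_eq_mk_choose_add]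
  simp

lemma rel_poly {G H : PowerSeries ℚ} (h : RecRel G H) :
    ∃ Q : ℚ[X], ∀ q : ℕ, Q.eval ((q : ℚ) + 1) = PowerSeries.coeff (q + 1) G ∧
      Q.eval (-((q : ℚ) + 1)) = - PowerSeries.coeff (q + 1) H := by
  obtain ⟨p, rfl, rfl⟩ := h
  induction p using Polynomial.induction_on' with
  | add p q hp hq =>
    obtain ⟨P, hP⟩ := hp
    obtain ⟨Q, hQ⟩ := hq
    refine ⟨P + Q, fun r => ?_⟩
    simp only [eval_add, map_add, (hP r).1, (hP r).2, (hQ r).1, (hQ r).2, true_and]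
    ring
  | monomial k c =>
    rcases k with _ | m
    · refine ⟨0, fun q => ?_⟩
      simp
    · refine ⟨C (c / (m.factorial : ℚ)) * (ascPochhammer ℚ m).comp (X + 1), fun q => ?_⟩
      have hm : (m.factorial : ℚ) ≠ 0 := by positivity
      simp only [eval_mul, eval_C, eval_comp, eval_add, eval_X, eval_one, aeval_monomial]
      rw [← Algebra.smul_def, ← Algebra.smul_def, one_sub_u, neg_pow, mul_pow]
      constructor
      · rw [PowerSeries.coeff_smul, coeff_u_pow]
        have : ((q : ℚ) + 1 + 1) = ((q + 1 + 1 : ℕ) : ℚ) := by push_cast; ring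
        rw [this, ← ascPochhammer_eval_cast, ascPochhammer_nat_eq_ascFactorial,
          Nat.ascFactorial_eq_factorial_mul_choose, add_comm (q + 1) m]
        push_cast
        rw [smul_eq_mul]
        field_simp
      · have e1 : (-((q : ℚ) + 1) + 1) = - (q : ℚ) := by ring
        rw [e1, ascPochhammer_eval_neg_eq_descPochhammer, descPochhammer_eval_eq_descFactorial,
          Nat.descFactorial_eq_factorial_mul_choose]
        have e2 : ((-1 : PowerSeries ℚ) ^ (m + 1)) = PowerSeries.C ((-1 : ℚ) ^ (m + 1)) := by simp
        rw [PowerSeries.coeff_smul, e2, PowerSeries.coeff_C_mul, PowerSeries.coeff_X_pow_mul',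
          coeff_u_pow]
        have e3 : (if m + 1 ≤ q + 1 then ((m + (q + 1 - (m + 1))).choose m : ℚ) else 0) =
            (q.choose m : ℚ) := by
          split_ifs with h
          · congr 2; omega
          · rw [Nat.choose_eq_zero_of_lt (by omega)]; simp
        rw [e3, smul_eq_mul]
        push_cast
        field_simp
        ring

end SeriesPart


section CombPart

open Finset

variable {n : ℕ}

/-- all row and column sums equal `r` -/
def Bal {R : Type*} [AddCommMonoid R] (r : R) (M : Fin n × Fin n → R) : Prop :=
  (∀ i, ∑ j, M (i, j) = r) ∧ (∀ j, ∑ i, M (i, j) = r)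

instance (r : ℕ) (M : Fin n × Fin n → ℕ) : Decidable (Bal r M) := by
  unfold Bal; infer_instance

/-- support of a matrix -/
def msupp (M : Fin n × Fin n → ℕ) : Finset (Fin n × Fin n) := univ.filter fun e => M e ≠ 0

/-- all balanced matrices of degree `r` -/
def balSet (n r : ℕ) : Finset (Fin n × Fin n → ℕ) :=
  (Fintype.piFinset fun _ => range (r + 1)).filter fun M => Bal r M

lemma mem_balSet {r : ℕ} {M : Fin n × Fin n → ℕ} : M ∈ balSet n r ↔ Bal r M := by
  simp only [balSet, mem_filter, Fintype.mem_piFinset, mem_range, and_iff_right_iff_imp]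
  rintro h ⟨i, j⟩
  rw [Nat.lt_succ_iff, ← h.1 i]
  exact single_le_sum (f := fun j => M (i, j)) (fun _ _ => Nat.zero_le _) (mem_univ j)

/-- number of balanced matrices of degree `r` and support `F` -/
def gcount (F : Finset (Fin n × Fin n)) (r : ℕ) : ℕ :=
  #((balSet n r).filter fun M => msupp M = F)

/-- `F` is the support of a balanced matrix -/
def IsFace (F : Finset (Fin n × Fin n)) : Prop := ∃ r M, Bal r M ∧ msupp M = F

/-- positions of a permutation -/
def ppos (σ : Equiv.Perm (Fin n)) : Finset (Fin n × Fin n) := univ.filter fun e => σ e.1 = e.2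

/-- permutation matrix -/
def pmat (σ : Equiv.Perm (Fin n)) : Fin n × Fin n → ℕ := fun e => if σ e.1 = e.2 then 1 else 0

lemma mem_msupp {M : Fin n × Fin n → ℕ} {e} : e ∈ msupp M ↔ M e ≠ 0 := by simp [msupp]

lemma Bal.add {R : Type*} [AddCommMonoid R] {r s : R} {M N : Fin n × Fin n → R} (h : Bal r M)
    (h' : Bal s N) : Bal (r + s) (M + N) := by
  constructor
  · intro i; simp [sum_add_distrib, h.1, h'.1]
  · intro i; simp [sum_add_distrib, h.2, h'.2]

lemma bal_pmat (σ : Equiv.Perm (Fin n)) : Bal 1 (pmat σ) := by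
  constructor
  · intro i; simp [pmat]
  · intro j
    simp only [pmat]
    rw [sum_eq_single (σ.symm j)]
    · simp
    · intro i _ hi
      rw [if_neg]
      rintro rfl
      simp at hi
    · simp

lemma msupp_add_pmat (M : Fin n × Fin n → ℕ) (σ : Equiv.Perm (Fin n)) :
    msupp (M + pmat σ) = msupp M ∪ ppos σ := by
  ext e
  simp only [mem_msupp, Pi.add_apply, pmat, mem_union, ppos, mem_filter, mem_univ, true_and]
  split_ifs with h <;> simp [h]

lemma gcount_succ (F : Finset (Fin n × Fin n)) (σ : Equiv.Perm (Fin n)) (hσ : ppos σ ⊆ F) (r : ℕ) :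
    gcount F (r + 1) = ∑ F' ∈ univ.filter (fun F' => F' ∪ ppos σ = F), gcount F' r := by
  have h1 : ∑ F' ∈ univ.filter (fun F' => F' ∪ ppos σ = F), gcount F' r =
      #((balSet n r).filter fun M => msupp M ∪ ppos σ = F) := by
    rw [card_eq_sum_card_fiberwise (f := msupp) (t := univ.filter (fun F' => F' ∪ ppos σ = F))]
    · refine sum_congr rfl fun F' hF' => ?_
      unfold gcount
      congr 1
      ext M
      simp only [mem_filter, mem_univ, true_and] at hF' ⊢
      constructor
      · rintro ⟨h, rfl⟩; exact ⟨⟨h, hF'⟩, rfl⟩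
      · rintro ⟨⟨h, _⟩, h'⟩; exact ⟨h, h'⟩
    · intro M hM
      simpa using (mem_filter.1 hM).2
  rw [h1]
  unfold gcount
  symm
  refine card_bij (fun M _ => M + pmat σ) ?_ ?_ ?_
  · intro M hM
    rw [mem_filter, mem_balSet] at hM ⊢
    exact ⟨hM.1.add (bal_pmat σ), by rw [msupp_add_pmat, hM.2]⟩
  · intro M _ M' _ h
    exact add_right_cancel h
  · intro M hM
    rw [mem_filter, mem_balSet] at hM
    obtain ⟨hb, rfl⟩ := hM
    have hle : ∀ e, pmat σ e ≤ M e := by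
      intro e
      unfold pmat
      split_ifs with h
      · have : e ∈ msupp M := hσ (by simp [ppos, h])
        rw [mem_msupp] at this
        omega
      · exact Nat.zero_le _
    have hadd : (M - pmat σ) + pmat σ = M := by
      ext e
      simp only [Pi.add_apply, Pi.sub_apply]
      have := hle e
      omega
    refine ⟨M - pmat σ, ?_, hadd⟩
    rw [mem_filter, mem_balSet]
    refine ⟨?_, by rw [← msupp_add_pmat, hadd]⟩
    constructor
    · intro i
      have h1 := hb.1 i
      rw [← hadd] at h1
      simp only [Pi.add_apply, sum_add_distrib] at h1
      rw [(bal_pmat σ).1 i] at h1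
      omega
    · intro i
      have h1 := hb.2 i
      rw [← hadd] at h1
      simp only [Pi.add_apply, sum_add_distrib] at h1
      rw [(bal_pmat σ).2 i] at h1
      omega

lemma gcount_not_face {F : Finset (Fin n × Fin n)} (h : ¬ IsFace F) (r : ℕ) : gcount F r = 0 := by
  rw [gcount, card_eq_zero, filter_eq_empty_iff]
  intro M hM hF
  exact h ⟨r, M, mem_balSet.1 hM, hF⟩

lemma bal_zero_iff {M : Fin n × Fin n → ℕ} : Bal 0 M ↔ M = 0 := by
  constructor
  · rintro ⟨h, _⟩
    ext ⟨i, j⟩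
    have := h i
    rw [sum_eq_zero_iff] at this
    exact this j (mem_univ j)
  · rintro rfl
    constructor <;> simp

lemma gcount_zero (F : Finset (Fin n × Fin n)) : gcount F 0 = if F = ∅ then 1 else 0 := by
  have : balSet n 0 = {0} := by
    ext M
    rw [mem_balSet, bal_zero_iff, mem_singleton]
  rw [gcount, this]
  have h0 : msupp (0 : Fin n × Fin n → ℕ) = ∅ := by ext; simp [mem_msupp]
  rw [filter_singleton, h0]
  by_cases h : F = ∅
  · simp [h]
  · rw [if_neg (fun h' => h h'.symm), if_neg h]; simp

lemma gcount_empty (hn : 0 < n) (r : ℕ) : gcount (∅ : Finset (Fin n × Fin n)) (r + 1) = 0 := by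
  rw [gcount, card_eq_zero, filter_eq_empty_iff]
  intro M hM hF
  rw [mem_balSet] at hM
  have h0 : ∀ e, M e = 0 := by
    intro e
    by_contra h
    have := mem_msupp.2 h
    rw [hF] at this
    simp at this
  have := hM.1 ⟨0, hn⟩
  simp [h0] at this

lemma IsFace.union {F F' : Finset (Fin n × Fin n)} (h : IsFace F) (h' : IsFace F') :
    IsFace (F ∪ F') := by
  obtain ⟨r, M, hM, rfl⟩ := h
  obtain ⟨s, N, hN, rfl⟩ := h'
  refine ⟨_, _, hM.add hN, ?_⟩
  ext e
  simp only [mem_msupp, mem_union, Pi.add_apply]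
  omega

lemma isFace_ppos (σ : Equiv.Perm (Fin n)) : IsFace (ppos σ) := by
  refine ⟨1, pmat σ, bal_pmat σ, ?_⟩
  ext e
  simp [mem_msupp, pmat, ppos]

lemma exists_perm_s5 {F : Finset (Fin n × Fin n)} (h : IsFace F) (hF : F.Nonempty) :
    ∃ σ : Equiv.Perm (Fin n), ppos σ ⊆ F := by
  obtain ⟨r, M, hM, rfl⟩ := h
  have hr : 0 < r := by
    rw [Nat.pos_iff_ne_zero]
    rintro rfl
    rw [bal_zero_iff] at hM
    subst hM
    obtain ⟨e, he⟩ := hF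
    simp [mem_msupp] at he
  let f (i : Fin n) : Finset (Fin n) := {j | M (i, j) ≠ 0}
  have hf (A : Finset (Fin n)) : #A ≤ #(A.biUnion f) := by
    have (i : _) : ∑ j ∈ f i, M (i, j) = r := by
      rw [← hM.1 i]
      apply sum_subset (filter_subset _ _)
      intro j _ hj
      simpa [f] using hj
    have h₁ : ∑ i ∈ A, ∑ j ∈ f i, M (i, j) = #A * r := by simp [this]
    have h₂ : ∑ i, ∑ j ∈ A.biUnion f, M (i, j) = #(A.biUnion f) * r := by
      simp [sum_comm (t := A.biUnion f), hM.2]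
    suffices #A * r ≤ #(A.biUnion f) * r by exact le_of_mul_le_mul_right this hr
    rw [← h₁, ← h₂]
    trans ∑ i ∈ A, ∑ j ∈ A.biUnion f, M (i, j)
    · refine sum_le_sum fun i hi => ?_
      exact sum_le_sum_of_subset_of_nonneg (subset_biUnion_of_mem f hi) (by simp)
    · exact sum_le_sum_of_subset_of_nonneg (by simp) fun _ _ _ => Nat.zero_le _
  obtain ⟨g, hg, hgmem⟩ := (all_card_le_biUnion_card_iff_exists_injective f).1 hf
  rw [Finite.injective_iff_bijective] at hg
  refine ⟨Equiv.ofBijective g hg, ?_⟩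
  rintro ⟨i, j⟩ hij
  simp only [ppos, mem_filter, mem_univ, true_and, Equiv.ofBijective_apply] at hij
  subst hij
  rw [mem_msupp]
  simpa [f] using hgmem i

/-- span of a face -/
def Vsp (F : Finset (Fin n × Fin n)) : Submodule ℚ (Fin n × Fin n → ℚ) where
  carrier := {x | (∀ e, e ∉ F → x e = 0) ∧ ∃ r, Bal r x}
  zero_mem' := ⟨fun _ _ => rfl, 0, by constructor <;> simp⟩
  add_mem' := by
    rintro a b ⟨ha, r, hr⟩ ⟨hb, s, hs⟩
    exact ⟨fun e he => by simp [ha e he, hb e he], r + s, hr.add hs⟩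
  smul_mem' := by
    rintro c a ⟨ha, r, hr⟩
    refine ⟨fun e he => by simp [ha e he], c * r, ?_⟩
    constructor
    · intro i; simp [← mul_sum, hr.1]
    · intro i; simp [← mul_sum, hr.2]

lemma mem_Vsp {F : Finset (Fin n × Fin n)} {x : Fin n × Fin n → ℚ} :
    x ∈ Vsp F ↔ (∀ e, e ∉ F → x e = 0) ∧ ∃ r, Bal r x := Iff.rfl

lemma isFace_iff (hn : 0 < n) (F : Finset (Fin n × Fin n)) :
    IsFace F ↔ ∃ x ∈ Vsp F, ∀ e ∈ F, 0 < x e := by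
  constructor
  · rintro ⟨r, M, hM, rfl⟩
    refine ⟨fun e => (M e : ℚ), ⟨fun e he => ?_, r, ?_⟩, fun e he => ?_⟩
    · rw [mem_msupp, not_not] at he
      simp [he]
    · constructor
      · intro i
        have := hM.1 i
        show ∑ j, (M (i, j) : ℚ) = r
        exact_mod_cast this
      · intro i
        have := hM.2 i
        show ∑ j, (M (j, i) : ℚ) = r
        exact_mod_cast this
    · rw [mem_msupp] at he
      have : 0 < M e := by omega
      show (0 : ℚ) < (M e : ℚ)
      exact_mod_cast this
  · rintro ⟨x, ⟨hx0, r, hr⟩, hx⟩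
    set D : ℕ := ∏ e, (x e).den with hD
    have hDpos : 0 < D := prod_pos fun e _ => (x e).den_pos
    have hnn : ∀ e, 0 ≤ x e := by
      intro e
      by_cases h : e ∈ F
      · exact (hx e h).le
      · rw [hx0 e h]
    have hM : ∀ e, ∃ m : ℕ, (m : ℚ) = D * x e := by
      intro e
      obtain ⟨k, hk⟩ : (x e).den ∣ D := dvd_prod_of_mem (fun e => (x e).den) (mem_univ e)
      refine ⟨k * (x e).num.toNat, ?_⟩
      have h1 : (((x e).num.toNat : ℤ) : ℚ) = (x e).num := by
        rw [Int.toNat_of_nonneg (Rat.num_nonneg.2 (hnn e))]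
      have h2 : ((x e).den : ℚ) * x e = (x e).num := by
        rw [mul_comm]; exact Rat.mul_den_eq_num (x e)
      rw [hk]
      push_cast
      push_cast at h1
      rw [h1, ← h2]; ring
    choose M hM using hM
    have hrow : ∀ i, ((∑ j, M (i, j) : ℕ) : ℚ) = D * r := by
      intro i
      push_cast
      simp only [hM]
      rw [← mul_sum, hr.1]
    have hcol : ∀ j, ((∑ i, M (i, j) : ℕ) : ℚ) = D * r := by
      intro i
      push_cast
      simp only [hM]
      rw [← mul_sum, hr.2]
    refine ⟨∑ j, M (⟨0, hn⟩, j), M, ⟨fun i => ?_, fun j => ?_⟩, ?_⟩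
    · have := (hrow i).trans (hrow ⟨0, hn⟩).symm
      exact_mod_cast this
    · have := (hcol j).trans (hrow ⟨0, hn⟩).symm
      exact_mod_cast this
    · ext e
      rw [mem_msupp]
      have hDq : (0 : ℚ) < D := by exact_mod_cast hDpos
      constructor
      · intro h
        by_contra he
        apply h
        have := hM e
        rw [hx0 e he, mul_zero] at this
        exact_mod_cast this
      · intro he h0
        have := hM e
        rw [h0] at this
        have h3 := mul_pos hDq (hx e he)
        rw [← this] at h3
        simp at h3

/-- signed dimension indicator -/
noncomputable def fsign (F : Finset (Fin n × Fin n)) : ℚ := (-1) ^ Module.finrank ℚ (Vsp F)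

open Classical in
lemma face_euler (hn : 0 < n) {a b : Finset (Fin n × Fin n)} (ha : IsFace a) (hb : IsFace b)
    (hab : a ⊂ b) :
    ∑ F ∈ univ.filter (fun F => a ⊆ F ∧ F ⊆ b ∧ IsFace F), fsign F = 0 := by
  obtain ⟨v, hvV, hv⟩ := (isFace_iff hn b).1 hb
  obtain ⟨y, hyV, hy⟩ := (isFace_iff hn a).1 ha
  let E := {e // e ∈ b \ a}
  have : Nonempty E := by
    obtain ⟨e, he, he'⟩ := exists_of_ssubset hab
    exact ⟨⟨e, by simp [he, he']⟩⟩
  let f : E → (Vsp b) →ₗ[ℚ] ℚ := fun e => (LinearMap.proj e.1).comp (Vsp b).subtype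
  have hf : ∀ e x, f e x = x.1 e.1 := fun e x => rfl
  have key := euler_relation f ⟨v, hvV⟩ (fun e => hv e.1 (mem_sdiff.1 e.2).1)
  rw [sum_filter]
  refine Eq.trans (Eq.symm ?_) key
  let φ : Finset E → Finset (Fin n × Fin n) := fun T => a ∪ T.map (Function.Embedding.subtype _)
  have hφ : ∀ T e, e ∈ φ T ↔ e ∈ a ∨ ∃ h : e ∈ b \ a, (⟨e, h⟩ : E) ∈ T := by
    intro T e
    simp [φ, E]
  have hTφ : ∀ T (e : E), e ∈ T ↔ e.1 ∈ φ T := by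
    intro T e
    rw [hφ]
    have := (mem_sdiff.1 e.2).2
    constructor
    · intro h; exact Or.inr ⟨e.2, h⟩
    · rintro (h | ⟨_, h⟩)
      · exact absurd h this
      · exact h
  have hφb : ∀ T, φ T ⊆ b := by
    intro T e he
    rcases (hφ T e).1 he with h | ⟨h, _⟩
    · exact hab.1 h
    · exact (mem_sdiff.1 h).1
  refine sum_of_injOn φ ?_ (by simp) ?_ ?_
  · intro T _ T' _ h
    ext e
    rw [hTφ, hTφ, h]
  · intro F _ hF
    rw [if_neg]
    rintro ⟨h1, h2, _⟩
    apply hF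
    refine ⟨univ.filter fun e : E => e.1 ∈ F, by simp, ?_⟩
    ext e
    rw [hφ]
    simp only [mem_filter, mem_univ, true_and, mem_sdiff]
    constructor
    · rintro (h | ⟨_, h⟩)
      · exact h1 h
      · exact h
    · intro h
      by_cases hea : e ∈ a
      · exact Or.inl hea
      · exact Or.inr ⟨⟨h2 h, hea⟩, h⟩
  · intro T _
    have hcond : (a ⊆ φ T ∧ φ T ⊆ b ∧ IsFace (φ T)) ↔
        ∃ x, (∀ e, e ∈ T → 0 < f e x) ∧ (∀ e, e ∉ T → f e x = 0) := by
      constructor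
      · rintro ⟨_, _, h⟩
        obtain ⟨x, hx, hx'⟩ := (isFace_iff hn _).1 h
        refine ⟨⟨x, fun e he => hx.1 e fun h => he (hφb T h), hx.2⟩, fun e he => ?_, fun e he => ?_⟩
        · exact hx' e.1 ((hTφ T e).1 he)
        · exact hx.1 e.1 fun h => he ((hTφ T e).2 h)
      · rintro ⟨x, hx, hx'⟩
        refine ⟨subset_union_left, hφb T, (isFace_iff hn _).2 ?_⟩
        obtain ⟨N, hN⟩ : ∃ N : ℚ, ∀ e ∈ a, 0 < x.1 e + N * y e := by
          have h1 : ∀ e, ∃ N : ℚ, e ∈ a → ∀ N' ≥ N, 0 < x.1 e + N' * y e := by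
            intro e
            by_cases he : e ∈ a
            · refine ⟨(1 - x.1 e) / y e, fun _ N' hN' => ?_⟩
              have := hy e he
              rw [ge_iff_le, div_le_iff₀ this] at hN'
              linarith
            · exact ⟨0, fun h => absurd h he⟩
          choose N hN using h1
          refine ⟨∑ e, |N e|, fun e he => hN e he _ ?_⟩
          exact (le_abs_self _).trans
            (single_le_sum (f := fun e => |N e|) (fun _ _ => abs_nonneg _) (mem_univ e))
        refine ⟨x.1 + N • y, ?_, ?_⟩
        · have hya : y ∈ Vsp b := ⟨fun e he => hyV.1 e fun h => he (hab.1 h), hyV.2⟩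
          refine ⟨fun e he => ?_, ((Vsp b).add_mem x.2 ((Vsp b).smul_mem N hya)).2⟩
          rw [hφ, not_or] at he
          have h1 : y e = 0 := hyV.1 e he.1
          have h2 : x.1 e = 0 := by
            by_cases heb : e ∈ b
            · have hs : e ∈ b \ a := mem_sdiff.2 ⟨heb, he.1⟩
              exact hx' ⟨e, hs⟩ fun h => he.2 ⟨hs, h⟩
            · exact x.2.1 e heb
          simp [h1, h2]
        · intro e he
          by_cases hea : e ∈ a
          · exact hN e hea
          · rcases (hφ T e).1 he with h | ⟨h, h'⟩
            · exact absurd h hea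
            · have h1 : y e = 0 := hyV.1 e hea
              have := hx ⟨e, h⟩ h'
              rw [hf] at this
              simpa [h1] using this
    have hdim : Module.finrank ℚ (Ksp f T) = Module.finrank ℚ (Vsp (φ T)) := by
      rw [← Submodule.finrank_map_subtype_eq]
      have : (Ksp f T).map (Vsp b).subtype = Vsp (φ T) := by
        ext x
        simp only [Submodule.mem_map, Submodule.subtype_apply, Subtype.exists, exists_and_right,
          exists_eq_right]
        constructor
        · rintro ⟨hx, hk⟩
          refine ⟨fun e he => ?_, hx.2⟩
          rw [hφ, not_or] at he
          by_cases heb : e ∈ b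
          · have hs : e ∈ b \ a := mem_sdiff.2 ⟨heb, he.1⟩
            exact hk ⟨e, hs⟩ fun h => he.2 ⟨hs, h⟩
          · exact hx.1 e heb
        · intro hx
          refine ⟨⟨fun e he => hx.1 e fun h => he (hφb T h), hx.2⟩, fun e he => ?_⟩
          exact hx.1 e.1 fun h => he ((hTφ T e).2 h)
      rw [this]
    rw [hdim]
    exact if_congr hcond.symm rfl rfl

end CombPart


section RecPart

open Finset

variable {n : ℕ}

/-- generating function of the relative interior of a face -/
noncomputable def Gs (F : Finset (Fin n × Fin n)) : PowerSeries ℚ :=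
  PowerSeries.mk fun r => (gcount F r : ℚ)

/-- generating function of a closed face -/
noncomputable def Gbar (F : Finset (Fin n × Fin n)) : PowerSeries ℚ := ∑ F' ∈ F.powerset, Gs F'

lemma ppos_nonempty (hn : 0 < n) (σ : Equiv.Perm (Fin n)) : (ppos σ).Nonempty :=
  ⟨(⟨0, hn⟩, σ ⟨0, hn⟩), by simp [ppos]⟩

lemma gcount_zero_of_ppos (hn : 0 < n) {σ : Equiv.Perm (Fin n)} {F : Finset (Fin n × Fin n)}
    (h : ppos σ ⊆ F) : gcount F 0 = 0 := by
  rw [gcount_zero, if_neg]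
  exact ((ppos_nonempty hn σ).mono h).ne_empty

lemma Gbar_eq (hn : 0 < n) {σ : Equiv.Perm (Fin n)} {F : Finset (Fin n × Fin n)}
    (h : ppos σ ⊆ F) :
    Gbar F = useries * ∑ F' ∈ F.powerset.filter (fun F' => ¬ ppos σ ⊆ F'), Gs F' := by
  set A := ∑ F' ∈ F.powerset.filter (fun F' => ¬ ppos σ ⊆ F'), Gs F' with hA
  have h1 : Gbar F = (∑ F' ∈ F.powerset.filter (fun F' => ppos σ ⊆ F'), Gs F') + A := by
    rw [Gbar, hA, sum_filter_add_sum_filter_not]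
  have h2 : (∑ F' ∈ F.powerset.filter (fun F' => ppos σ ⊆ F'), Gs F') =
      PowerSeries.X * Gbar F := by
    ext r
    rcases r with _ | r
    · rw [map_sum, PowerSeries.coeff_zero_X_mul]
      apply sum_eq_zero
      intro F' hF'
      rw [mem_filter] at hF'
      simp only [Gs, PowerSeries.coeff_mk]
      rw [gcount_zero_of_ppos hn hF'.2]; simp
    · rw [map_sum, PowerSeries.coeff_succ_X_mul, Gbar, map_sum]
      simp only [Gs, PowerSeries.coeff_mk]
      rw [← sum_fiberwise_of_maps_to (s := F.powerset)
        (t := F.powerset.filter (fun F' => ppos σ ⊆ F')) (g := fun F' => F' ∪ ppos σ)]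
      · refine sum_congr rfl fun F'' hF'' => ?_
        rw [mem_filter, mem_powerset] at hF''
        rw [gcount_succ F'' σ hF''.2]
        push_cast
        refine sum_congr ?_ fun _ _ => rfl
        ext F'
        simp only [mem_filter, mem_univ, true_and, mem_powerset]
        constructor
        · intro h'
          exact ⟨(subset_union_left.trans h'.subset).trans hF''.1, h'⟩
        · exact fun h' => h'.2
      · intro F' hF'
        rw [mem_powerset] at hF'
        rw [mem_filter, mem_powerset]
        exact ⟨union_subset hF' h, subset_union_right⟩
  have h3 := u_mul
  linear_combination (-Gbar F) * h3 + useries * (h1 + h2)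

lemma Gs_eq (hn : 0 < n) {σ : Equiv.Perm (Fin n)} {F : Finset (Fin n × Fin n)}
    (h : ppos σ ⊆ F) :
    Gs F = (useries - 1) *
      ∑ F' ∈ univ.filter (fun F' => F' ∪ ppos σ = F ∧ ¬ ppos σ ⊆ F'), Gs F' := by
  set B := ∑ F' ∈ univ.filter (fun F' => F' ∪ ppos σ = F ∧ ¬ ppos σ ⊆ F'), Gs F' with hB
  have h1 : Gs F = PowerSeries.X * (Gs F + B) := by
    ext r
    rcases r with _ | r
    · rw [PowerSeries.coeff_zero_X_mul]
      simp only [Gs, PowerSeries.coeff_mk]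
      rw [gcount_zero_of_ppos hn h]; simp
    · rw [PowerSeries.coeff_succ_X_mul, map_add, hB, map_sum]
      simp only [Gs, PowerSeries.coeff_mk]
      rw [gcount_succ F σ h, ← sum_filter_add_sum_filter_not _ (fun F' => ppos σ ⊆ F')]
      rw [filter_filter, filter_filter]
      have : univ.filter (fun F' => F' ∪ ppos σ = F ∧ ppos σ ⊆ F') = {F} := by
        ext F'
        simp only [mem_filter, mem_univ, true_and, mem_singleton]
        constructor
        · rintro ⟨h1, h2⟩
          rwa [union_eq_left.2 h2] at h1
        · rintro rfl
          exact ⟨union_eq_left.2 h, h⟩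
      rw [this]
      push_cast
      simp
  have h3 := u_mul
  linear_combination (-Gs F - B) * h3 + useries * h1

lemma Gs_not_face {F : Finset (Fin n × Fin n)} (h : ¬ IsFace F) : Gs F = 0 := by
  ext r
  simp [Gs, gcount_not_face h]

lemma fsign_sq (F : Finset (Fin n × Fin n)) : fsign F * fsign F = 1 := by
  unfold fsign
  rw [← mul_pow]; simp

open Classical in
lemma face_ev (hn : 0 < n) {a b : Finset (Fin n × Fin n)} (ha : IsFace a) (hb : IsFace b) :
    ∑ F ∈ univ.filter (fun F => a ⊆ F ∧ F ⊆ b ∧ IsFace F), fsign F =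
      if a = b then fsign b else 0 := by
  split_ifs with h
  · subst h
    rw [sum_eq_single_of_mem a (by simp [ha])]
    intro F hF hne
    simp only [mem_filter, mem_univ, true_and] at hF
    exact absurd (hF.2.1.antisymm hF.1) hne
  · by_cases hab : a ⊆ b
    · exact face_euler hn ha hb (hab.ssubset_of_ne h)
    · apply sum_eq_zero
      intro F hF
      simp only [mem_filter, mem_univ, true_and] at hF
      exact absurd (hF.1.trans hF.2.1) hab

open Classical in
lemma partner_sum (hn : 0 < n) {σ : Equiv.Perm (Fin n)} {F : Finset (Fin n × Fin n)}
    (hF : IsFace F) (hσ : ppos σ ⊆ F) :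
    ∑ F' ∈ F.powerset.filter (fun F' => ¬ ppos σ ⊆ F'),
      (if IsFace F' then fsign F' • Gbar F' else 0) =
    - (fsign F • ∑ F' ∈ univ.filter (fun F' => F' ∪ ppos σ = F ∧ ¬ ppos σ ⊆ F'), Gs F') := by
  have h1 : ∑ F' ∈ F.powerset.filter (fun F' => ¬ ppos σ ⊆ F'),
      (if IsFace F' then fsign F' • Gbar F' else 0) =
      ∑ F'' : Finset (Fin n × Fin n), (∑ F' ∈ univ.filter
        (fun F' => (F'' ⊆ F' ∧ F' ⊆ F ∧ IsFace F') ∧ ¬ ppos σ ⊆ F'), fsign F') • Gs F'' := by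
    rw [← sum_filter, filter_filter]
    simp only [Gbar, smul_sum, sum_smul]
    apply sum_comm'
    intro x y
    simp only [mem_filter, mem_univ, mem_powerset, true_and, and_true]
    tauto
  rw [h1, smul_sum, ← sum_neg_distrib, sum_filter]
  refine sum_congr rfl fun F'' _ => ?_
  by_cases hf : IsFace F''
  swap
  · simp [Gs_not_face hf]
  have h2 := sum_filter_add_sum_filter_not
    (univ.filter (fun F' => F'' ⊆ F' ∧ F' ⊆ F ∧ IsFace F')) (fun F' => ppos σ ⊆ F') fsign
  rw [filter_filter, filter_filter] at h2
  have h3 : univ.filter (fun F' => (F'' ⊆ F' ∧ F' ⊆ F ∧ IsFace F') ∧ ppos σ ⊆ F') =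
      univ.filter (fun F' => (F'' ∪ ppos σ) ⊆ F' ∧ F' ⊆ F ∧ IsFace F') := by
    ext F'
    simp only [mem_filter, mem_univ, true_and, union_subset_iff]
    tauto
  rw [h3, face_ev hn hf hF, face_ev hn (hf.union (isFace_ppos σ)) hF] at h2
  rw [eq_sub_of_add_eq' h2]
  by_cases hs : ppos σ ⊆ F''
  · rw [union_eq_left.2 hs]
    simp [hs]
  · by_cases hFF : F'' = F
    · subst hFF
      exact absurd hσ hs
    · simp only [hFF, if_false, hs, not_false_eq_true, and_true]
      split_ifs <;> simp

theorem face_reciprocity (hn : 0 < n) (F : Finset (Fin n × Fin n)) (hF : IsFace F) :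
    RecRel (Gbar F) (fsign F • Gs F) := by
  classical
  induction F using Finset.strongInduction with
  | H F ih =>
  rcases F.eq_empty_or_nonempty with rfl | hne
  · have h1 : Gs (∅ : Finset (Fin n × Fin n)) = 1 := by
      ext r
      rcases r with _ | r
      · simp [Gs, gcount_zero]
      · simp [Gs, gcount_empty hn, PowerSeries.coeff_one]
    have h2 : fsign (∅ : Finset (Fin n × Fin n)) = 1 := by
      have : Vsp (∅ : Finset (Fin n × Fin n)) = ⊥ := by
        rw [eq_bot_iff]
        intro x hx
        rw [Submodule.mem_bot]
        ext e
        exact hx.1 e (by simp)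
      rw [fsign, this]; simp
    rw [Gbar, powerset_empty, sum_singleton, h1, h2, one_smul]
    exact RecRel.one
  · obtain ⟨σ, hσ⟩ := exists_perm_s5 hF hne
    have hA : RecRel (∑ F' ∈ F.powerset.filter (fun F' => ¬ ppos σ ⊆ F'), Gs F')
        (∑ F' ∈ F.powerset.filter (fun F' => ¬ ppos σ ⊆ F'),
          (if IsFace F' then fsign F' • Gbar F' else 0)) := by
      apply RecRel.sum
      intro F' hF'
      rw [mem_filter, mem_powerset] at hF'
      split_ifs with hf
      · have hss : F' ⊂ F := hF'.1.ssubset_of_ne (by rintro rfl; exact hF'.2 hσ)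
        have := ((ih F' hss hf).symm).smul (fsign F')
        rwa [smul_smul, fsign_sq, one_smul] at this
      · rw [Gs_not_face hf]; exact RecRel.zero
    have := hA.mul_u
    rw [partner_sum hn hF hσ, ← Gbar_eq hn hσ] at this
    rw [Gs_eq hn hσ]
    convert this using 1
    rw [← mul_smul_comm]
    ring

end RecPart

section FinalPart

open Finset

variable {n : ℕ}

/-- off-diagonal positions -/
def offd (n : ℕ) : Finset (Fin n × Fin n) := univ.filter fun e => e.1 ≠ e.2

/-- off-diagonal all-ones matrix -/
def omat (n : ℕ) : Fin n × Fin n → ℕ := fun e => if e.1 = e.2 then 0 else 1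

lemma bal_omat (n : ℕ) : Bal (n - 1) (omat n) := by
  constructor
  · intro i
    simp only [omat]
    rw [sum_ite]
    simp [filter_ne]
  · intro i
    simp only [omat]
    rw [sum_ite]
    simp [filter_ne']

lemma isFace_offd (n : ℕ) : IsFace (offd n) := by
  refine ⟨_, _, bal_omat n, ?_⟩
  ext e
  simp [mem_msupp, omat, offd]

lemma S_eq_card_s5 (n r : ℕ) : S n r = #((balSet n r).filter fun M => msupp M ⊆ offd n) := by
  unfold S
  rw [← Fintype.card_coe, ← Nat.card_eq_fintype_card]
  refine Nat.card_congr
    { toFun := fun M => ⟨fun e => M.1 e.1 e.2, ?_⟩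
      invFun := fun N => ⟨fun i j => N.1 (i, j), ?_⟩
      left_inv := fun _ => rfl
      right_inv := fun _ => rfl }
  · obtain ⟨M, h0, h1, h2⟩ := M
    rw [mem_filter, mem_balSet]
    refine ⟨⟨h1, h2⟩, ?_⟩
    rintro ⟨i, j⟩ he
    rw [mem_msupp] at he
    simp only [offd, mem_filter, mem_univ, true_and]
    rintro rfl
    exact he (h0 i)
  · obtain ⟨N, hN⟩ := N
    rw [mem_filter, mem_balSet] at hN
    refine ⟨fun i => ?_, hN.1.1, hN.1.2⟩
    by_contra h
    have := hN.2 (mem_msupp.2 h)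
    simp [offd] at this

lemma coeff_Gbar (n r : ℕ) : PowerSeries.coeff r (Gbar (offd n)) = (S n r : ℚ) := by
  rw [Gbar, map_sum, S_eq_card_s5,
    card_eq_sum_card_fiberwise (f := msupp) (t := (offd n).powerset)]
  · push_cast
    refine sum_congr rfl fun F' hF' => ?_
    simp only [Gs, PowerSeries.coeff_mk, gcount]
    congr 2
    ext M
    simp only [mem_filter, mem_powerset] at hF' ⊢
    constructor
    · rintro ⟨h, rfl⟩; exact ⟨⟨h, hF'⟩, rfl⟩
    · rintro ⟨⟨h, _⟩, h'⟩; exact ⟨h, h'⟩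
  · intro M hM
    simpa using (mem_filter.1 hM).2

lemma coeff_Gs (n q : ℕ) : PowerSeries.coeff (q + (n - 1)) (Gs (offd n)) = (S n q : ℚ) := by
  rw [Gs, PowerSeries.coeff_mk, S_eq_card_s5, gcount]
  congr 1
  symm
  refine card_bij (fun M _ => M + omat n) ?_ ?_ ?_
  · intro M hM
    rw [mem_filter, mem_balSet] at hM ⊢
    refine ⟨hM.1.add (bal_omat n), ?_⟩
    ext e
    simp only [mem_msupp, Pi.add_apply, omat, offd, mem_filter, mem_univ, true_and]
    split_ifs with h
    · have : e ∉ msupp M := fun h' => by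
        have := hM.2 h'
        simp [offd, h] at this
      rw [mem_msupp, not_not] at this
      simp [this, h]
    · simp [h]
  · intro M _ M' _ h
    exact add_right_cancel h
  · intro M hM
    rw [mem_filter, mem_balSet] at hM
    obtain ⟨hb, hs⟩ := hM
    have hle : ∀ e, omat n e ≤ M e := by
      intro e
      unfold omat
      split_ifs with h
      · exact Nat.zero_le _
      · have : e ∈ msupp M := by rw [hs]; simp [offd, h]
        rw [mem_msupp] at this
        omega
    have hadd : (M - omat n) + omat n = M := by
      ext e
      simp only [Pi.add_apply, Pi.sub_apply]
      have := hle e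
      omega
    refine ⟨M - omat n, ?_, hadd⟩
    rw [mem_filter, mem_balSet]
    refine ⟨?_, ?_⟩
    · constructor
      · intro i
        have h1 := hb.1 i
        rw [← hadd] at h1
        simp only [Pi.add_apply, sum_add_distrib] at h1
        rw [(bal_omat n).1 i] at h1
        omega
      · intro i
        have h1 := hb.2 i
        rw [← hadd] at h1
        simp only [Pi.add_apply, sum_add_distrib] at h1
        rw [(bal_omat n).2 i] at h1
        omega
    · rw [← hs]
      intro e he
      rw [mem_msupp] at he ⊢
      simp only [Pi.sub_apply] at he
      omega

/-- constraint matrix -/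
def cmat (n : ℕ) : Matrix (Fin n ⊕ Fin n) (Option (offd n)) ℚ
  | Sum.inl _, none => -1
  | Sum.inr _, none => -1
  | Sum.inl i, some e => if e.1.1 = i then 1 else 0
  | Sum.inr j, some e => if e.1.2 = j then 1 else 0

lemma finrank_ker_transpose (hn : 3 ≤ n) :
    Module.finrank ℚ (LinearMap.ker (cmat n).transpose.mulVecLin) = 1 := by
  have hk : ∀ y, y ∈ LinearMap.ker (cmat n).transpose.mulVecLin ↔
      (∑ i, y (Sum.inl i) + ∑ i, y (Sum.inr i) = 0) ∧
      ∀ i j, i ≠ j → y (Sum.inl i) + y (Sum.inr j) = 0 := by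
    intro y
    rw [LinearMap.mem_ker, Matrix.mulVecLin_apply]
    constructor
    · intro h
      constructor
      · have := congrFun h none
        simp [Matrix.mulVec, dotProduct, cmat, Matrix.transpose] at this
        linarith
      · intro i j hij
        have := congrFun h (some ⟨(i, j), by simp [offd, hij]⟩)
        simpa [Matrix.mulVec, dotProduct, cmat, Matrix.transpose] using this
    · rintro ⟨h1, h2⟩
      ext o
      rcases o with _ | ⟨⟨i, j⟩, he⟩
      · simp [Matrix.mulVec, dotProduct, cmat, Matrix.transpose]
        linarith
      · have := h2 i j (by simpa [offd] using he)
        simpa [Matrix.mulVec, dotProduct, cmat, Matrix.transpose] using this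
  let y0 : Fin n ⊕ Fin n → ℚ := Sum.elim (fun _ => 1) (fun _ => -1)
  have hy0 : y0 ∈ LinearMap.ker (cmat n).transpose.mulVecLin := by
    rw [hk]
    simp [y0]
  refine finrank_eq_one (⟨y0, hy0⟩ : LinearMap.ker (cmat n).transpose.mulVecLin) ?_ ?_
  · intro h
    have := congrFun (congrArg Subtype.val h) (Sum.inl ⟨0, by omega⟩)
    simp [y0] at this
  · rintro ⟨y, hy⟩
    obtain ⟨_, h2⟩ := (hk y).1 hy
    have third : ∀ i j : Fin n, ∃ k, k ≠ i ∧ k ≠ j := by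
      intro i j
      by_contra hcon
      push Not at hcon
      have : (univ : Finset (Fin n)) ⊆ {i, j} := by
        intro k _
        by_cases h : k = i
        · simp [h]
        · simp [hcon k h]
      have := (card_le_card this).trans card_le_two
      simp at this
      omega
    have hl : ∀ i j, y (Sum.inl i) = y (Sum.inl j) := by
      intro i j
      obtain ⟨k, hki, hkj⟩ := third i j
      have a := h2 i k hki.symm
      have b := h2 j k hkj.symm
      linarith
    let z : Fin n := ⟨0, by omega⟩
    refine ⟨y (Sum.inl z), ?_⟩
    apply Subtype.ext
    ext i
    rcases i with i | j
    · simp [y0, hl i z]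
    · obtain ⟨k, hk1, _⟩ := third j j
      have a := h2 k j hk1
      rw [hl k z] at a
      simp [y0]
      linarith

lemma card_offd (n : ℕ) : #(offd n) = n * n - n := by
  have : offd n = (univ : Finset (Fin n)).offDiag := by
    ext e; simp [offd]
  rw [this, offDiag_card]; simp

/-- extension by zero of an off-diagonal vector -/
def extz (n : ℕ) (x : Option (offd n) → ℚ) : Fin n × Fin n → ℚ :=
  fun e => if h : e ∈ offd n then x (some ⟨e, h⟩) else 0

lemma sum_offd (x : Option (offd n) → ℚ) (p : Fin n × Fin n → Prop) [DecidablePred p] :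
    ∑ e : offd n, (if p e.1 then x (some e) else 0) =
      ∑ e : Fin n × Fin n, if p e then extz n x e else 0 := by
  rw [← sum_subset (subset_univ (offd n)) (fun e _ he => by simp [extz, he]),
    ← sum_coe_sort (offd n)]
  refine sum_congr rfl fun e _ => ?_
  simp [extz]

lemma mem_ker_cmat (x : Option (offd n) → ℚ) :
    x ∈ LinearMap.ker (cmat n).mulVecLin ↔ Bal (x none) (extz n x) := by
  rw [LinearMap.mem_ker, Matrix.mulVecLin_apply]
  have h1 : ∀ i, (cmat n).mulVec x (Sum.inl i) = - x none + ∑ j, extz n x (i, j) := by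
    intro i
    have := sum_offd x (fun e => e.1 = i)
    rw [Fintype.sum_prod_type] at this
    simp only [Matrix.mulVec, dotProduct, cmat, Fintype.sum_option, ite_mul, one_mul, zero_mul, neg_mul]
    rw [this, sum_eq_single i]
    · simp
    · intro b _ hb; simp [hb]
    · simp
  have h2 : ∀ j, (cmat n).mulVec x (Sum.inr j) = - x none + ∑ i, extz n x (i, j) := by
    intro i
    have := sum_offd x (fun e => e.2 = i)
    rw [Fintype.sum_prod_type] at this
    simp only [Matrix.mulVec, dotProduct, cmat, Fintype.sum_option, ite_mul, one_mul, zero_mul, neg_mul]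
    rw [this]
    simp
  constructor
  · intro h
    constructor
    · intro i
      have := congrFun h (Sum.inl i)
      rw [h1] at this
      simp at this; linarith
    · intro i
      have := congrFun h (Sum.inr i)
      rw [h2] at this
      simp at this; linarith
  · rintro ⟨ha, hb⟩
    ext (i | i)
    · rw [h1, ha]; simp
    · rw [h2, hb]; simp

lemma finrank_offd (hn : 3 ≤ n) : Even (Module.finrank ℚ (Vsp (offd n))) := by
  have e1 : Module.finrank ℚ (Vsp (offd n)) =
      Module.finrank ℚ (LinearMap.ker (cmat n).mulVecLin) := by
    let L : (Option (offd n) → ℚ) →ₗ[ℚ] (Fin n × Fin n → ℚ) :=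
      { toFun := extz n
        map_add' := by
          intro x y; ext e
          by_cases h : e ∈ offd n <;> simp [extz, h]
        map_smul' := by
          intro x y; ext e
          by_cases h : e ∈ offd n <;> simp [extz, h] }
    have hL : ∀ x, L x = extz n x := fun _ => rfl
    have hinj : Function.Injective (L.domRestrict (LinearMap.ker (cmat n).mulVecLin)) := by
      rintro ⟨x, hx⟩ ⟨y, hy⟩ hxy
      simp only [LinearMap.domRestrict_apply, hL] at hxy
      rw [mem_ker_cmat] at hx hy
      apply Subtype.ext
      ext o
      rcases o with _ | ⟨e, he⟩
      · have a := hx.1 ⟨0, by omega⟩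
        have b := hy.1 ⟨0, by omega⟩
        rw [hxy] at a
        exact a.symm.trans b
      · have := congrFun hxy e
        simpa [extz, he] using this
    rw [← LinearMap.finrank_range_of_inj hinj]
    have : LinearMap.range (L.domRestrict (LinearMap.ker (cmat n).mulVecLin)) = Vsp (offd n) := by
      ext y
      simp only [LinearMap.mem_range, LinearMap.domRestrict_apply, hL, Subtype.exists]
      constructor
      · rintro ⟨x, hx, rfl⟩
        rw [mem_ker_cmat] at hx
        exact ⟨fun e he => by simp [extz, he], _, hx⟩
      · rintro ⟨hy, r, hr⟩
        have : extz n (fun o => o.elim r fun e => y e.1) = y := by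
          ext e
          by_cases h : e ∈ offd n
          · simp [extz, h]
          · simp [extz, h, hy e h]
        refine ⟨fun o => o.elim r fun e => y e.1, ?_, this⟩
        rw [mem_ker_cmat, this]
        exact hr
    rw [this]
  have h1 := LinearMap.finrank_range_add_finrank_ker (cmat n).mulVecLin
  have h2 := LinearMap.finrank_range_add_finrank_ker (cmat n).transpose.mulVecLin
  rw [finrank_ker_transpose hn] at h2
  have h3 : Module.finrank ℚ (LinearMap.range (cmat n).transpose.mulVecLin) =
      Module.finrank ℚ (LinearMap.range (cmat n).mulVecLin) := Matrix.rank_transpose (cmat n)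
  rw [h3] at h2
  simp only [Module.finrank_fintype_fun_eq_card, Fintype.card_sum, Fintype.card_fin,
    Fintype.card_option, Fintype.card_coe, card_offd] at h1 h2
  rw [e1]
  obtain ⟨m, rfl⟩ : ∃ m, n = m + 3 := ⟨n - 3, by omega⟩
  have h4 : (m + 3) * (m + 3) - (m + 3) = m * (m + 1) + 4 * m + 6 := by
    rw [Nat.sub_eq_iff_eq_add (by nlinarith)]; ring
  rw [h4] at h1
  have h5 := Nat.even_mul_succ_self m
  rw [Nat.even_iff] at h5 ⊢
  omega

end FinalPart

theorem S_polynomial_reciprocity (n : ℕ) (hn : 3 ≤ n) (P : Polynomial ℚ)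
    (hP : ∀ r : ℕ, P.eval (r : ℚ) = S n r) :
    (∀ x : ℚ, P.eval (-((n : ℚ) - 1) - x) = -P.eval x) ∧
      P.comp (Polynomial.C (-((n : ℚ) - 1)) - Polynomial.X) = -P := by
  have hrel := face_reciprocity (by omega) (offd n) (isFace_offd n)
  have hs : fsign (offd n) = 1 := (finrank_offd hn).neg_one_pow
  rw [hs, one_smul] at hrel
  obtain ⟨Q, hQ⟩ := rel_poly hrel
  have hQP : Q = P := by
    apply Polynomial.eq_of_infinite_eval_eq
    refine Set.infinite_of_injective_forall_mem (f := fun q : ℕ => (q : ℚ) + 1)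
      (fun a b h => by simpa using h) fun q => ?_
    show Q.eval ((q : ℚ) + 1) = P.eval ((q : ℚ) + 1)
    rw [(hQ q).1, coeff_Gbar, ← hP]
    push_cast; rfl
  subst hQP
  have hcomp : Q.comp (Polynomial.C (-((n : ℚ) - 1)) - Polynomial.X) = -Q := by
    apply Polynomial.eq_of_infinite_eval_eq
    refine Set.infinite_of_injective_forall_mem (f := fun q : ℕ => (q : ℚ))
      Nat.cast_injective fun q => ?_
    show (Q.comp (Polynomial.C (-((n : ℚ) - 1)) - Polynomial.X)).eval (q : ℚ) =
      (-Q).eval (q : ℚ)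
    rw [Polynomial.eval_comp, Polynomial.eval_neg, hP, ← coeff_Gs]
    obtain ⟨m, rfl⟩ : ∃ m, n = m + 2 := ⟨n - 2, by omega⟩
    have h := (hQ (q + m)).2
    have e : q + (m + 2 - 1) = q + m + 1 := by omega
    rw [e, ← h]
    congr 1
    simp
    ring
  refine ⟨fun x => ?_, hcomp⟩
  have := congrArg (Polynomial.eval x) hcomp
  simpa [Polynomial.eval_comp] using this
end
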